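/- arXiv:1912.10403 — 2 statements merged into one kernel-verified Lean document; each statement's English description precedes it below -/
import Mathlib

section
/- Assume m_j > 0, k_j > 0, b_j ≥ 0 for all j = 1,…,n. Fix j ∈ [1, n−1] and suppose (−λ)·g_j(λ)/(f_j, g_j) ≪ f_j(λ)/(f_j, g_j). If b_{j+1} ≠ 0 and the linear polynomial k_{j+1} − λ·b_{j+1} does not divide f_j(λ)/(f_j, g_j), then (f_{j+1}, g_{j+1}) = (f_j, g_j) and f_{j+1}(λ)/(f_{j+1}, g_{j+1}) ≪ f_j(λ)·(k_{j+1} − λ b_{j+1})/(f_j, g_j). -/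
open Polynomial

/-- The tridiagonal matrix of order `j` built from `k 1, …, k j` (1-indexed):
diagonal entries `k r + k (r+1)` for `r < j`, last diagonal entry `k j`,
off-diagonal entries `-(k (r+1))`. -/
noncomputable def triMat (k : ℕ → ℝ) (j : ℕ) : Matrix (Fin j) (Fin j) ℝ :=
  Matrix.of fun r c =>
    if (r : ℕ) = (c : ℕ) then
      (if (r : ℕ) = j - 1 then k j else k ((r : ℕ) + 1) + k ((r : ℕ) + 2))
    else if (r : ℕ) + 1 = (c : ℕ) then -k ((c : ℕ) + 1)
    else if (c : ℕ) + 1 = (r : ℕ) then -k ((r : ℕ) + 1)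
    else 0

/-- The matrix `K_j - λ (M_j + B_j)` with entries in `ℝ[λ]`. -/
noncomputable def sysMat (m k b : ℕ → ℝ) (j : ℕ) :
    Matrix (Fin j) (Fin j) (Polynomial ℝ) :=
  (triMat k j).map Polynomial.C -
    (Polynomial.X : Polynomial ℝ) •
      ((Matrix.diagonal (fun i : Fin j => m ((i : ℕ) + 1)) + triMat b j).map Polynomial.C)

/-- `f_j(λ) = det (K_j - λ (M_j + B_j))`. -/
noncomputable def fpoly (m k b : ℕ → ℝ) (j : ℕ) : Polynomial ℝ :=
  (sysMat m k b j).det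

/-- `g_j(λ)`: the leading principal minor of order `j-1` of `K_j - λ (M_j + B_j)`
(so `g 1 = 1`, the determinant of the empty matrix). -/
noncomputable def gpoly (m k b : ℕ → ℝ) (j : ℕ) : Polynomial ℝ :=
  ((sysMat m k b j).submatrix (Fin.castLE (Nat.sub_le j 1))
    (Fin.castLE (Nat.sub_le j 1))).det

/-- `Prec g f` formalizes `g ≪ f`: both polynomials have degree `s ≥ 1`, each has `s`
distinct real roots, the leading coefficients `c`, `d` have the same sign, and the roots
strictly interlace as `β 0 < α 0 < β 1 < α 1 < ⋯ < β (s-1) < α (s-1)`. -/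
def Prec (g f : Polynomial ℝ) : Prop :=
  ∃ (s : ℕ) (c d : ℝ) (α β : Fin s → ℝ),
    0 < s ∧ 0 < c * d ∧ StrictMono α ∧ StrictMono β ∧
    f = Polynomial.C c * ∏ i, (Polynomial.X - Polynomial.C (α i)) ∧
    g = Polynomial.C d * ∏ i, (Polynomial.X - Polynomial.C (β i)) ∧
    (∀ i, β i < α i) ∧
    ∀ (i : Fin s) (h : (i : ℕ) + 1 < s), α i < β ⟨(i : ℕ) + 1, h⟩

/-!
Write `p = k_{j+1} - λ b_{j+1}`. Expanding the determinants along the last row and column gives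
`g_{j+1} = f_j + p g_j` and `f_{j+1} = p f_j - λ m_{j+1} g_{j+1}`, from which the statement on
greatest common divisors follows.

For the interlacing, `g ≪ f` holds exactly when `f` splits over `ℝ`, `f` and `g` have the same
degree and leading coefficients of the same sign, and `g f' > 0` at every root of `f`: the last
condition says that `g f` increases through each root of `f`, so that it changes sign strictly
between that root and the previous one (or `-∞`). With `F`, `G` the quotients of `f_j`, `g_j` by
their gcd and `Q = -λ G`, the quotient of `f_{j+1}` is `H = p F - m (λ F - p Q)`, and at the roots
of `F p`
* `H (F p)' = m p² (Q F') > 0` where `F = 0`,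
* `H (F p)' = m k F² > 0` where `p = 0`.
-/

section Determinants

variable {R : Type*} [CommRing R] {n : ℕ}

theorem det_add_single_self (M : Matrix (Fin (n + 1)) (Fin (n + 1)) R) (i : Fin (n + 1)) (c : R) :
    (M + Matrix.single i i c).det = M.det + c * (M.submatrix i.succAbove i.succAbove).det := by
  have row_add : M + Matrix.single i i c = M.updateRow i (M i + c • Pi.single i 1) := by
    ext r s
    rcases eq_or_ne r i with rfl | hr
    · simp [Matrix.single_apply, Pi.single_apply, eq_comm]
    · simp [hr, hr.symm]
  rw [row_add, Matrix.det_updateRow_add, Matrix.updateRow_eq_self, Matrix.det_updateRow_smul,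
    ← Matrix.adjugate_apply, Matrix.adjugate_fin_succ_eq_det_submatrix, Even.neg_one_pow ⟨_, rfl⟩,
    one_mul]

theorem det_eq_mul_of_castSucc_last_eq_zero (M : Matrix (Fin (n + 1)) (Fin (n + 1)) R)
    (hM : ∀ i : Fin n, M i.castSucc (Fin.last n) = 0) :
    M.det = M (Fin.last n) (Fin.last n) * (M.submatrix Fin.castSucc Fin.castSucc).det := by
  simp [Matrix.det_succ_column M (Fin.last n), Fin.sum_univ_castSucc, hM,
    Even.neg_one_pow ⟨n, rfl⟩, Fin.succAbove_last]

theorem det_of_tridiagonal_last (M : Matrix (Fin (n + 2)) (Fin (n + 2)) R)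
    (hrow : ∀ i : Fin n, M (Fin.last _) i.castSucc.castSucc = 0)
    (hcol : ∀ i : Fin n, M i.castSucc.castSucc (Fin.last _) = 0) :
    M.det = M (Fin.last _) (Fin.last _) * (M.submatrix Fin.castSucc Fin.castSucc).det
      - M (Fin.last _) (Fin.last n).castSucc * M (Fin.last n).castSucc (Fin.last _) *
        ((M.submatrix Fin.castSucc Fin.castSucc).submatrix Fin.castSucc Fin.castSucc).det := by
  have skip_castSucc (i : Fin n) :
      (Fin.last n).castSucc.succAbove i.castSucc = i.castSucc.castSucc :=
    Fin.succAbove_of_castSucc_lt _ _ (by simp [Fin.lt_def])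
  have skip_last : (Fin.last n).castSucc.succAbove (Fin.last n) = Fin.last (n + 1) := by simp
  have minor_det :
      (M.submatrix Fin.castSucc (Fin.last n).castSucc.succAbove).det =
        M (Fin.last n).castSucc (Fin.last _) *
          ((M.submatrix Fin.castSucc Fin.castSucc).submatrix Fin.castSucc Fin.castSucc).det := by
    rw [det_eq_mul_of_castSucc_last_eq_zero _ fun i => by
      rw [Matrix.submatrix_apply, skip_last, hcol], Matrix.submatrix_apply, skip_last]
    congr 2
    ext r s
    simp only [Matrix.submatrix_apply, skip_castSucc]
  rw [Matrix.det_succ_row M (Fin.last _), Fin.sum_univ_castSucc, Fin.sum_univ_castSucc]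
  simp only [hrow, mul_zero, zero_mul, Finset.sum_const_zero, zero_add, Fin.succAbove_last,
    minor_det, Fin.val_last, Fin.val_castSucc, Even.neg_one_pow ⟨n + 1, rfl⟩,
    Odd.neg_one_pow (show Odd (n + 1 + n) from ⟨n, by ring⟩)]
  ring

end Determinants

section Recurrences

variable (m k b : ℕ → ℝ)

/-- The dynamic stiffness `k_i - λ b_i` of the `i`-th link. -/
noncomputable def linkPoly (i : ℕ) : ℝ[X] := C (k i) - C (b i) * X

theorem sysMat_apply (j : ℕ) (r s : Fin j) :
    sysMat m k b j r s =
      if (r : ℕ) = s then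
        (if (r : ℕ) = j - 1 then linkPoly k b j
          else linkPoly k b (r + 1) + linkPoly k b (r + 2)) - C (m (r + 1)) * X
      else if (r : ℕ) + 1 = s then -linkPoly k b (s + 1)
      else if (s : ℕ) + 1 = r then -linkPoly k b (r + 1)
      else 0 := by
  simp only [sysMat, triMat, linkPoly, Matrix.sub_apply, Matrix.map_apply, Matrix.smul_apply,
    Matrix.add_apply, Matrix.of_apply, Matrix.diagonal_apply, Fin.ext_iff, smul_eq_mul]
  split_ifs <;> simp only [map_add, map_neg, map_zero] <;> ring

theorem gpoly_succ (j : ℕ) :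
    gpoly m k b (j + 1) = ((sysMat m k b (j + 1)).submatrix Fin.castSucc Fin.castSucc).det := rfl

theorem sysMat_submatrix_castSucc (j : ℕ) :
    (sysMat m k b (j + 2)).submatrix Fin.castSucc Fin.castSucc =
      sysMat m k b (j + 1) + Matrix.single (Fin.last j) (Fin.last j) (linkPoly k b (j + 2)) := by
  ext1 r s
  simp only [Matrix.submatrix_apply, Matrix.add_apply, Matrix.single_apply, sysMat_apply,
    Fin.val_castSucc, Fin.ext_iff, Fin.val_last]
  grind

theorem gpoly_add_two (j : ℕ) :
    gpoly m k b (j + 2) = fpoly m k b (j + 1) + linkPoly k b (j + 2) * gpoly m k b (j + 1) := by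
  rw [gpoly_succ, sysMat_submatrix_castSucc, det_add_single_self, Fin.succAbove_last, fpoly,
    gpoly_succ]

theorem fpoly_add_two (j : ℕ) :
    fpoly m k b (j + 2) = linkPoly k b (j + 2) * fpoly m k b (j + 1)
      - C (m (j + 2)) * X * gpoly m k b (j + 2) := by
  have minor_eq :
      ((sysMat m k b (j + 2)).submatrix Fin.castSucc Fin.castSucc).submatrix
          Fin.castSucc Fin.castSucc =
        (sysMat m k b (j + 1)).submatrix Fin.castSucc Fin.castSucc := by
    ext1 r s
    simp [sysMat_submatrix_castSucc, Fin.ext_iff, r.isLt.ne']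
  have corner : sysMat m k b (j + 2) (Fin.last _) (Fin.last _) =
      linkPoly k b (j + 2) - C (m (j + 2)) * X := by simp [sysMat_apply]
  have below : sysMat m k b (j + 2) (Fin.last _) (Fin.last j).castSucc = -linkPoly k b (j + 2) := by
    simp [sysMat_apply, show j + 1 + 1 ≠ j by lia]
  have right : sysMat m k b (j + 2) (Fin.last j).castSucc (Fin.last _) = -linkPoly k b (j + 2) := by
    simp [sysMat_apply]
  rw [fpoly, det_of_tridiagonal_last, minor_eq, corner, below, right, ← gpoly_succ, ← gpoly_succ,
    gpoly_add_two]
  · ring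
  all_goals
    intro i
    have := i.isLt
    rw [sysMat_apply]
    simp only [Fin.val_last, Fin.val_castSucc]
    split_ifs <;> first | omega | rfl

end Recurrences

section Coprimality

theorem gcd_mul_mul_of_isCoprime {R : Type*} [CommRing R] [IsDomain R] [StrongNormalizedGCDMonoid R]
    (d : R) {a b : R} (hab : IsCoprime a b) : gcd (d * a) (d * b) = normalize d := by
  have gcd_eq_one : gcd a b = 1 := by
    rw [← normalize_gcd, normalize_eq_one, gcd_isUnit_iff_isRelPrime]
    exact hab.isRelPrime
  rw [gcd_mul_left, gcd_eq_one, mul_one]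

theorem isCoprime_mul_sub_mul_add_mul {R : Type*} [CommRing R] {p f g : R} (hpf : IsCoprime p f)
    (hfg : IsCoprime f g) (r : R) : IsCoprime (p * f - r * (f + p * g)) (f + p * g) := by
  have coprime_p : IsCoprime p (f + p * g) := hpf.add_mul_left_right g
  have coprime_f : IsCoprime f (f + p * g) := by
    simpa [add_comm] using (hpf.symm.mul_right hfg).add_mul_left_right 1
  simpa [sub_eq_add_neg] using (coprime_p.mul_left coprime_f).add_mul_right_left (-r)

theorem isCoprime_C_sub_C_mul_X {K : Type*} [Field K] {k b : K} {f : K[X]} (hb : b ≠ 0)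
    (hf : ¬ C k - C b * X ∣ f) : IsCoprime (C k - C b * X) f := by
  have irreducible : Irreducible (C k - C b * X) :=
    irreducible_of_degree_eq_one <| by
      rw [show C k - C b * X = C (-b) * X + C k by rw [C_neg]; ring]
      exact degree_linear (neg_ne_zero.2 hb)
  exact irreducible.coprime_iff_not_dvd.2 hf

end Coprimality

section Interlacing

open scoped Topology

variable {f g : ℝ[X]}

theorem eq_C_leadingCoeff_mul_prod_X_sub_C {K ι : Type*} [Field K] [Fintype ι] {f : K[X]}
    {v : ι → K} (hv : Function.Injective v) (hroot : ∀ i, f.IsRoot (v i))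
    (hcard : f.natDegree = Fintype.card ι) : f = C f.leadingCoeff * ∏ i, (X - C (v i)) :=
  eq_leadingCoeff_mul_of_monic_of_dvd_of_natDegree_le (monic_prod_X_sub_C v Finset.univ)
    (Fintype.prod_dvd_of_coprime (pairwise_coprime_X_sub_C hv)
      fun i => dvd_iff_isRoot.2 (hroot i))
    (by simp [hcard])

theorem eventually_sign_eval_mul {a : ℝ} (ha : f.IsRoot a)
    (hsign : 0 < g.eval a * f.derivative.eval a) :
    ∀ᶠ x in 𝓝 a, SignType.sign ((g * f).eval x) = SignType.sign (x - a) := by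
  refine eventually_nhdsWithin_sign_eq_of_deriv_pos (f := fun x => (g * f).eval x) ?_ ?_
  · rw [Polynomial.deriv]
    simpa [ha.eq_zero] using hsign
  · simp [ha.eq_zero]

theorem eventually_atBot_eval_mul_pos (hdeg : g.natDegree = f.natDegree)
    (hlead : 0 < f.leadingCoeff * g.leadingCoeff) : ∀ᶠ x in Filter.atBot, 0 < (g * f).eval x := by
  have hf : f ≠ 0 := by rintro rfl; simp at hlead
  have hg : g ≠ 0 := by rintro rfl; simp at hlead
  have tendsto_div := div_tendsto_atBot_leadingCoeff_div_of_degree_eq g f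
    (by rw [degree_eq_natDegree hg, degree_eq_natDegree hf, hdeg])
  have div_pos : 0 < g.leadingCoeff / f.leadingCoeff :=
    div_pos_iff.2 (mul_pos_iff.1 (mul_comm f.leadingCoeff _ ▸ hlead))
  filter_upwards [tendsto_div.eventually_const_lt div_pos] with x hx
  rw [eval_mul]
  exact mul_pos_iff.2 (div_pos_iff.1 hx)

theorem exists_eval_mul_pos_of_lt (hdeg : g.natDegree = f.natDegree)
    (hlead : 0 < f.leadingCoeff * g.leadingCoeff)
    (hsign : ∀ x, f.IsRoot x → 0 < g.eval x * f.derivative.eval x) (a : ℝ) :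
    ∃ x < a, 0 < (g * f).eval x ∧ ∀ y, f.IsRoot y → y < a → y < x := by
  have hf : f ≠ 0 := by rintro rfl; simp at hlead
  obtain no_root | some_root := (f.roots.toFinset.filter (· < a)).eq_empty_or_nonempty
  · obtain ⟨x, hpos, hxa⟩ := ((eventually_atBot_eval_mul_pos hdeg hlead).and
      (Filter.eventually_lt_atBot a)).exists
    refine ⟨x, hxa, hpos, fun y hy hya => ?_⟩
    simpa [no_root] using (by simp [hf, hy.eq_zero, hya] : y ∈ f.roots.toFinset.filter (· < a))
  · obtain ⟨c, hc, c_max⟩ := Finset.exists_max_image _ id some_root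
    obtain ⟨hfc, hca⟩ : f.eval c = 0 ∧ c < a := by simpa [hf] using hc
    obtain ⟨x, hsign_x, hcx, hxa⟩ := ((eventually_sign_eval_mul hfc (hsign c hfc)).filter_mono
      nhdsWithin_le_nhds |>.and (Ioo_mem_nhdsGT hca)).exists
    rw [sign_pos (sub_pos.2 hcx), sign_eq_one_iff] at hsign_x
    refine ⟨x, hxa, hsign_x, fun y hy hya => (c_max y ?_).trans_lt hcx⟩
    simp [hf, hy.eq_zero, hya]

theorem exists_root_lt (hdeg : g.natDegree = f.natDegree)
    (hlead : 0 < f.leadingCoeff * g.leadingCoeff)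
    (hsign : ∀ x, f.IsRoot x → 0 < g.eval x * f.derivative.eval x) {a : ℝ} (ha : f.IsRoot a) :
    ∃ z < a, g.IsRoot z ∧ ∀ y, f.IsRoot y → y < a → y < z := by
  obtain ⟨x, hxa, hx, root_lt⟩ := exists_eval_mul_pos_of_lt hdeg hlead hsign a
  obtain ⟨y, ⟨hxy, hya⟩, hy⟩ : ∃ y ∈ Set.Ioo x a, (g * f).eval y < 0 := by
    obtain ⟨y, hsign_y, hy⟩ := ((eventually_sign_eval_mul ha (hsign a ha)).filter_mono
      nhdsWithin_le_nhds |>.and (Ioo_mem_nhdsLT hxa)).exists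
    rw [sign_neg (sub_neg.2 hy.2), sign_eq_neg_one_iff] at hsign_y
    exact ⟨y, hy, hsign_y⟩
  obtain ⟨z, ⟨hxz, hzy⟩, hz⟩ :=
    intermediate_value_Ioo' hxy.le (g * f).continuous.continuousOn ⟨hy, hx⟩
  have not_root : f.eval z ≠ 0 := fun h => (root_lt z h (hzy.trans hya)).not_gt hxz
  refine ⟨z, hzy.trans hya, ?_, fun y hy hya => (root_lt y hy hya).trans hxz⟩
  simpa [not_root] using hz

theorem Prec.eval_mul_eval_derivative_pos (h : Prec g f) {x : ℝ} (hx : f.IsRoot x) :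
    0 < g.eval x * f.derivative.eval x := by
  obtain ⟨s, c, d, α, β, -, hcd, hα, hβ, rfl, rfl, hβα, hαβ⟩ := h
  obtain ⟨i, rfl⟩ : ∃ i, x = α i := by
    have hc : c ≠ 0 := left_ne_zero_of_mul hcd.ne'
    simpa [IsRoot, eval_prod, Finset.prod_eq_zero_iff, hc, sub_eq_zero] using hx
  have factor_pos : ∀ l ∈ Finset.univ.erase i, 0 < (α i - β l) * (α i - α l) := by
    intro l hl
    rcases (Finset.ne_of_mem_erase hl).lt_or_gt with hli | hil
    · exact mul_pos (sub_pos.2 ((hβα l).trans (hα hli))) (sub_pos.2 (hα hli))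
    · have αi_lt_βl : α i < β l :=
        (hαβ i (by lia)).trans_le (hβ.monotone (Fin.le_def.2 hil))
      exact mul_pos_of_neg_of_neg (sub_neg.2 αi_lt_βl) (sub_neg.2 (hα hil))
  have eval_derivative :
      (derivative (C c * ∏ i, (X - C (α i)))).eval (α i) =
        c * ∏ l ∈ Finset.univ.erase i, (α i - α l) := by
    rw [derivative_C_mul, eval_C_mul, ← Lagrange.nodal_eq,
      Lagrange.eval_nodal_derivative_eval_node_eq (Finset.mem_univ i), Lagrange.eval_nodal]
  rw [eval_derivative, eval_C_mul, eval_prod]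
  simp only [eval_sub, eval_X, eval_C]
  rw [← Finset.mul_prod_erase _ _ (Finset.mem_univ i)]
  calc
    0 < (c * d) * (α i - β i) * ∏ l ∈ Finset.univ.erase i, (α i - β l) * (α i - α l) :=
      mul_pos (mul_pos hcd (sub_pos.2 (hβα i))) (Finset.prod_pos factor_pos)
    _ = _ := by rw [Finset.prod_mul_distrib]; ring

theorem prec_of_eval_mul_eval_derivative_pos (hpos : 0 < f.natDegree) (hf : f.Splits)
    (hdeg : g.natDegree = f.natDegree) (hlead : 0 < f.leadingCoeff * g.leadingCoeff)
    (hsign : ∀ x, f.IsRoot x → 0 < g.eval x * f.derivative.eval x) : Prec g f := by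
  have f_ne_zero : f ≠ 0 := by rintro rfl; simp at hpos
  have nodup : f.roots.Nodup := by
    rw [Multiset.nodup_iff_count_le_one]
    intro x
    rw [count_roots]
    by_contra! h
    obtain ⟨hx, hx'⟩ := (one_lt_rootMultiplicity_iff_isRoot f_ne_zero).1 h
    simpa [hx'.eq_zero] using hsign x hx
  have card_roots : f.roots.toFinset.card = f.natDegree := by
    rw [Multiset.toFinset_card_of_nodup nodup, hf.natDegree_eq_card_roots]
  let α := f.roots.toFinset.orderEmbOfFin card_roots
  have α_root (i) : f.IsRoot (α i) :=
    isRoot_of_mem_roots (Multiset.mem_toFinset.1 (Finset.orderEmbOfFin_mem _ card_roots i))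
  choose β β_lt β_root lt_β using fun i => exists_root_lt hdeg hlead hsign (α_root i)
  have α_lt_β {i l} (h : i < l) : α i < β l := lt_β l _ (α_root i) (α.strictMono h)
  have β_mono : StrictMono β := fun i l h => (β_lt i).trans (α_lt_β h)
  exact ⟨f.natDegree, f.leadingCoeff, g.leadingCoeff, α, β, hpos, hlead, α.strictMono, β_mono,
    eq_C_leadingCoeff_mul_prod_X_sub_C α.injective α_root (by simp),
    eq_C_leadingCoeff_mul_prod_X_sub_C β_mono.injective β_root (by simp [hdeg]),
    β_lt, fun i h => α_lt_β (Fin.lt_def.2 (Nat.lt_succ_self i))⟩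

theorem prec_iff : Prec g f ↔
    0 < f.natDegree ∧ f.Splits ∧ g.natDegree = f.natDegree ∧
      0 < f.leadingCoeff * g.leadingCoeff ∧
      ∀ x, f.IsRoot x → 0 < g.eval x * f.derivative.eval x := by
  refine ⟨fun h => ⟨?_, ?_, ?_, ?_, fun x => h.eval_mul_eval_derivative_pos⟩,
    fun ⟨hpos, hf, hdeg, hlead, hsign⟩ =>
      prec_of_eval_mul_eval_derivative_pos hpos hf hdeg hlead hsign⟩
  all_goals
    obtain ⟨s, c, d, α, β, hs, hcd, -, -, rfl, rfl, -, -⟩ := h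
    have hc : c ≠ 0 := left_ne_zero_of_mul hcd.ne'
    have hd : d ≠ 0 := right_ne_zero_of_mul hcd.ne'
  · simpa [natDegree_C_mul hc] using hs
  · exact .C_mul (.prod fun i _ => .X_sub_C _) c
  · simp [natDegree_C_mul hc, natDegree_C_mul hd]
  · simpa [leadingCoeff_mul, (monic_prod_X_sub_C _ _).leadingCoeff] using hcd

theorem eval_mul_eval_derivative_mul_pos {k b m : ℝ} (hm : 0 < m) (hk : 0 < k)
    (hcop : IsCoprime (C k - C b * X) f)
    (hsign : ∀ x, f.IsRoot x → 0 < g.eval x * f.derivative.eval x) {x : ℝ}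
    (hx : (f * (C k - C b * X)).IsRoot x) :
    0 < ((C k - C b * X) * f - C m * (X * f - (C k - C b * X) * g)).eval x *
      (f * (C k - C b * X)).derivative.eval x := by
  have eval_ne_zero : k - b * x ≠ 0 ∨ f.eval x ≠ 0 := by
    simpa using aeval_ne_zero_of_isCoprime hcop x
  have root_or : f.eval x = 0 ∨ k - b * x = 0 := by simpa using hx
  suffices 0 < ((k - b * x) * f.eval x - m * (x * f.eval x - (k - b * x) * g.eval x)) *
      (f.derivative.eval x * (k - b * x) - f.eval x * b) by
    convert this using 2 <;> simp [sub_eq_add_neg]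
  rcases root_or with hf | hp
  · have hp : k - b * x ≠ 0 := eval_ne_zero.resolve_right (not_not.2 hf)
    calc
      0 < m * (k - b * x) ^ 2 * (g.eval x * f.derivative.eval x) :=
        mul_pos (mul_pos hm (sq_pos_of_ne_zero hp)) (hsign x hf)
      _ = _ := by rw [hf]; ring
  · have hf : f.eval x ≠ 0 := eval_ne_zero.resolve_left (not_not.2 hp)
    calc
      0 < m * k * f.eval x ^ 2 := mul_pos (mul_pos hm hk) (sq_pos_of_ne_zero hf)
      _ = m * (b * x) * f.eval x ^ 2 := by rw [sub_eq_zero.1 hp]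
      _ = _ := by rw [hp]; ring

theorem coeff_natDegree_succ_mul_sub_mul (hdeg : g.natDegree = f.natDegree) (k b m : ℝ) :
    ((C k - C b * X) * f - C m * (X * f - (C k - C b * X) * g)).coeff (f.natDegree + 1) =
      -(b * f.leadingCoeff + m * f.leadingCoeff + m * b * g.leadingCoeff) := by
  have hf : f.coeff (f.natDegree + 1) = 0 := coeff_eq_zero_of_natDegree_lt (by simp)
  have hg : g.coeff (f.natDegree + 1) = 0 := coeff_eq_zero_of_natDegree_lt (by simp [hdeg])
  simp only [sub_mul, coeff_sub, coeff_C_mul, mul_assoc, coeff_X_mul, hf, hg, leadingCoeff, hdeg]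
  ring

theorem Prec.mul_sub_mul (h : Prec g f) {k b m : ℝ} (hm : 0 < m) (hk : 0 < k) (hb : 0 < b)
    (hcop : IsCoprime (C k - C b * X) f) :
    Prec ((C k - C b * X) * f - C m * (X * f - (C k - C b * X) * g)) (f * (C k - C b * X)) := by
  obtain ⟨hpos, hf, hdeg, hlead, hsign⟩ := prec_iff.1 h
  set p : ℝ[X] := C k - C b * X with hp
  have p_eq : p = C (-b) * X + C k := by rw [hp, C_neg]; ring
  have hb' : -b ≠ 0 := neg_ne_zero.2 hb.ne'
  have degree_p : p.natDegree = 1 := p_eq ▸ natDegree_linear hb'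
  have lead_p : p.leadingCoeff = -b := p_eq ▸ leadingCoeff_linear hb'
  have degree_fp : (f * p).natDegree = f.natDegree + 1 := by
    have p_ne_zero : p ≠ 0 := ne_zero_of_natDegree_gt (n := 0) (by lia)
    rw [natDegree_mul (ne_zero_of_natDegree_gt hpos) p_ne_zero, degree_p]
  have lead_pos : 0 < (f * p).leadingCoeff *
      (p * f - C m * (X * f - p * g)).coeff (f.natDegree + 1) := by
    rw [leadingCoeff_mul, lead_p, hp, coeff_natDegree_succ_mul_sub_mul hdeg]
    have hc : f.leadingCoeff ≠ 0 := left_ne_zero_of_mul hlead.ne'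
    calc
      0 < b * ((b + m) * f.leadingCoeff ^ 2 + m * b * (f.leadingCoeff * g.leadingCoeff)) := by
        positivity
      _ = _ := by ring
  have degree_h : (p * f - C m * (X * f - p * g)).natDegree = f.natDegree + 1 :=
    natDegree_eq_of_le_of_coeff_ne_zero (by compute_degree; lia) (right_ne_zero_of_mul lead_pos.ne')
  refine prec_iff.2 ⟨by lia, hf.mul (.of_natDegree_le_one degree_p.le), by rw [degree_h, degree_fp],
    ?_, fun x => eval_mul_eval_derivative_mul_pos hm hk hcop hsign⟩
  rwa [← degree_h] at lead_pos

end Interlacing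

theorem stmt_6_general (m k b : ℕ → ℝ) (j : ℕ) (hj : 1 ≤ j)
    (hm : 0 < m (j + 1)) (hk : 0 < k (j + 1)) (hb : 0 < b (j + 1))
    (hyp : Prec (-X * gpoly m k b j / gcd (fpoly m k b j) (gpoly m k b j))
      (fpoly m k b j / gcd (fpoly m k b j) (gpoly m k b j)))
    (hndvd : ¬ C (k (j + 1)) - C (b (j + 1)) * X ∣
      fpoly m k b j / gcd (fpoly m k b j) (gpoly m k b j)) :
    gcd (fpoly m k b (j + 1)) (gpoly m k b (j + 1)) = gcd (fpoly m k b j) (gpoly m k b j) ∧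
    Prec (fpoly m k b (j + 1) / gcd (fpoly m k b (j + 1)) (gpoly m k b (j + 1)))
      (fpoly m k b j * (C (k (j + 1)) - C (b (j + 1)) * X) /
        gcd (fpoly m k b j) (gpoly m k b j)) := by
  obtain ⟨i, rfl⟩ := Nat.exists_eq_add_of_le' hj
  set D := gcd (fpoly m k b (i + 1)) (gpoly m k b (i + 1))
  set F := fpoly m k b (i + 1) / D
  set G := gpoly m k b (i + 1) / D
  set p := linkPoly k b (i + 2)
  have hD : D ≠ 0 := fun h => hndvd (by simp [F, h])
  have f_eq : fpoly m k b (i + 1) = D * F :=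
    (EuclideanDomain.mul_div_cancel' hD (gcd_dvd_left _ _)).symm
  have g_eq : gpoly m k b (i + 1) = D * G :=
    (EuclideanDomain.mul_div_cancel' hD (gcd_dvd_right _ _)).symm
  have coprime_FG : IsCoprime F G := isCoprime_div_gcd_div_gcd_of_gcd_ne_zero hD
  have coprime_pF : IsCoprime p F := isCoprime_C_sub_C_mul_X hb.ne' hndvd
  have g_succ : gpoly m k b (i + 2) = D * (F + p * G) := by rw [gpoly_add_two, f_eq, g_eq]; ring
  have f_succ : fpoly m k b (i + 2) = D * (p * F - C (m (i + 2)) * X * (F + p * G)) := by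
    rw [fpoly_add_two, g_succ, f_eq]; ring
  have gcd_succ : gcd (fpoly m k b (i + 2)) (gpoly m k b (i + 2)) = D := by
    rw [f_succ, g_succ, gcd_mul_mul_of_isCoprime D
      (isCoprime_mul_sub_mul_add_mul coprime_pF coprime_FG _), normalize_gcd]
  refine ⟨gcd_succ, ?_⟩
  rw [gcd_succ, f_succ, f_eq, mul_assoc D F, mul_div_cancel_left₀ _ hD, mul_div_cancel_left₀ _ hD]
  rw [g_eq, mul_left_comm, mul_div_cancel_left₀ _ hD] at hyp
  convert hyp.mul_sub_mul hm hk hb coprime_pF using 1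
  change _ = p * F - C (m (i + 2)) * (X * F - p * (-X * G))
  ring

/-- Lemma `two`(ii): the case `b_{j+1} ≠ 0` and `(k_{j+1} − λ b_{j+1}) ∤ f_j/(f_j,g_j)`.
Here `gcd` is the monic-normalized gcd in `ℝ[λ]`. -/
theorem stmt_6 (n : ℕ) (m k b : ℕ → ℝ)
    (hm : ∀ j, 1 ≤ j → j ≤ n → 0 < m j)
    (hk : ∀ j, 1 ≤ j → j ≤ n → 0 < k j)
    (hb : ∀ j, 1 ≤ j → j ≤ n → 0 ≤ b j)
    (j : ℕ) (hj1 : 1 ≤ j) (hj2 : j ≤ n - 1)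
    (hyp : Prec (-Polynomial.X * gpoly m k b j / gcd (fpoly m k b j) (gpoly m k b j))
      (fpoly m k b j / gcd (fpoly m k b j) (gpoly m k b j)))
    (hbne : b (j + 1) ≠ 0)
    (hndvd : ¬ (Polynomial.C (k (j + 1)) - Polynomial.C (b (j + 1)) * Polynomial.X) ∣
      (fpoly m k b j / gcd (fpoly m k b j) (gpoly m k b j))) :
    gcd (fpoly m k b (j + 1)) (gpoly m k b (j + 1)) =
      gcd (fpoly m k b j) (gpoly m k b j) ∧
    Prec
      (fpoly m k b (j + 1) / gcd (fpoly m k b (j + 1)) (gpoly m k b (j + 1)))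
      (fpoly m k b j * (Polynomial.C (k (j + 1)) - Polynomial.C (b (j + 1)) * Polynomial.X) /
        gcd (fpoly m k b j) (gpoly m k b j)) := by
  exact stmt_6_general m k b j hj1 (hm _ (by lia) (by lia)) (hk _ (by lia) (by lia))
    ((hb _ (by lia) (by lia)).lt_of_ne' hbne) hyp hndvd
end

section
/- Let p be an integer with 2 < p ≤ m, let F(λ) = ∏_{i=1}^{p}(λ − α_i) and G(λ) = ∏_{i=1}^{p−1}(λ − β_i) be real polynomials whose roots satisfy α_p ∈ [λ_p, Λ) and, for each i = 1,…,p−1: λ_i ≤ α_i, α_i + C_1^n·ρ_i < β_i, β_i < λ_i + (1 + C_2(i))^n·ρ_i, and λ_i + (1 + C_2(i))^n·ρ_i < λ_{i+1}. Let M > 0 and let μ, ν, m* be real numbers with 0 < m* < M and −μ/ν > C·M. Then there exist monic real polynomials F_0 and G_0, F_0 having p−1 distinct real roots α'_1 < ⋯ < α'_{p−1} and G_0 having p−2 distinct real roots β'_1 < ⋯ < β'_{p−2}, such that α'_{p−1} ∈ (α_{p−1}, λ_p) and for each i = 1,…,p−2: α'_i ∈ (α_i, β_i) and C_1·(β_i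 − α_i) ≤ β'_i − α'_i ≤ C_2(i)·(β_i − α_i); moreover there exist real numbers λ* > 0, b* > 0 and μ_0, ν_0 with −μ_0/ν_0 > −μ/ν − m* such that the identities μ·F(λ) = −m*·ν·λ·G(λ) + b*·μ_0·(λ* − λ)·F_0(λ) and ν·G(λ) = μ_0·F_0(λ) + b*·ν_0·(λ* − λ)·G_0(λ) hold in ℝ[λ]. -/
open Polynomial

/-- `Δ = (1/2)·min{1, min_{1≤i≤m−1}(λ_{i+1} − λ_i)}`. -/
noncomputable def Del (m : ℕ) (lam : ℕ → ℝ) : ℝ :=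
  (1 / 2) * min 1 (sInf ((fun i => lam (i + 1) - lam i) '' Set.Icc 1 (m - 1)))

/-- `Λ = 1 + λ_m`. -/
noncomputable def Lamb (m : ℕ) (lam : ℕ → ℝ) : ℝ := 1 + lam m

/-- `ε = Δ^{n²+n+1}/(n·2^{3(n+1)³}·Λ^{(n+1)²})`. -/
noncomputable def eps (n m : ℕ) (lam : ℕ → ℝ) : ℝ :=
  Del m lam ^ (n ^ 2 + n + 1) /
    ((n : ℝ) * 2 ^ (3 * (n + 1) ^ 3) * Lamb m lam ^ ((n + 1) ^ 2))

/-- `ρ_i = ε^{(n+1)^{m−i}}`. -/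
noncomputable def rho (n m : ℕ) (lam : ℕ → ℝ) (i : ℕ) : ℝ :=
  eps n m lam ^ ((n + 1) ^ (m - i))

/-- `C_1 = Δ/(2^{n+1}Λ)`. -/
noncomputable def Cone (n m : ℕ) (lam : ℕ → ℝ) : ℝ :=
  Del m lam / (2 ^ (n + 1) * Lamb m lam)

/-- `C_2(j) = 2^{2(n+1)²}·Λ^{n+1}/(Δ^n·ε^{(n+1)^{m−j−1}})`. -/
noncomputable def Ctwo (n m : ℕ) (lam : ℕ → ℝ) (j : ℕ) : ℝ :=
  2 ^ (2 * (n + 1) ^ 2) * Lamb m lam ^ (n + 1) /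
    (Del m lam ^ n * eps n m lam ^ ((n + 1) ^ (m - j - 1)))

/-- `C = 2^{2n+1}(1 + Λ^n)/(C_1^{2n²}·ρ_1^{2n})`. -/
noncomputable def CC (n m : ℕ) (lam : ℕ → ℝ) : ℝ :=
  2 ^ (2 * n + 1) * (1 + Lamb m lam ^ n) /
    (Cone n m lam ^ (2 * n ^ 2) * rho n m lam 1 ^ (2 * n))

/-!
Put `K = -μ/ν` and `c = m*`. Eliminating `b*`, `μ₀`, `ν₀` turns the two identities into one step of
the Euclidean algorithm, `K F - c λ G = (K - c) (λ - λ*) F₀` and `G - r F₀ = (1 - r) (λ - λ*) G₀`,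
where `λ*` is the largest root of `K F - c λ G` and `r = G(λ*) / F₀(λ*)` lies in `(0, 1)`. Sign
changes on the interlacing roots locate the roots `α'_i` and `β'_i`.

As `K > C c`, comparing `|F|` with `|λ G|` at `α'_i` puts `α'_i` in the lower half of `(α_i, β_i)`,
so that `β'_i - α'_i` is at least `(β_i - α_i) / 2`. For the upper bound, the ratios
`(x - β_j) / (x - α'_j)` at `x = β'_i` multiply to `r < 1`, and those with `j > i + 1` exceed `1`.
The remaining ones, by the Weierstrass product inequality, give
`(β_{i+1} - α'_{i+1}) / (β_{i+1} - x) < ∑_{j ≤ i} (β_j - α'_j) / (x - α'_j)`, where the terms with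
`j < i` are negligible because `ρ_j` is much smaller than `ρ_{i+1}`.
-/

section

open Finset Lagrange

lemma one_sub_sum_le_prod_one_sub {ι R : Type*} [CommRing R] [LinearOrder R] [IsStrictOrderedRing R]
    {s : Finset ι} {y : ι → R} (h0 : ∀ i ∈ s, 0 ≤ y i) (h1 : ∀ i ∈ s, y i ≤ 1) :
    1 - ∑ i ∈ s, y i ≤ ∏ i ∈ s, (1 - y i) := by
  let : LinearOrder ι := IsWellOrder.linearOrder WellOrderingRel
  rw [prod_one_sub_ordered]
  refine sub_le_sub_left (sum_le_sum fun i hi ↦ mul_le_of_le_one_right (h0 i hi) ?_) 1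
  refine prod_le_one (fun j hj ↦ ?_) fun j hj ↦ ?_
  · exact sub_nonneg.mpr (h1 j (mem_filter.mp hj).1)
  · exact sub_le_self 1 (h0 j (mem_filter.mp hj).1)

/-! ### Real polynomials with prescribed roots -/

lemma nodal_Icc_add_one {R : Type*} [CommRing R] (N : ℕ) (v : ℕ → R) :
    nodal (Icc 1 (N + 1)) v = (X - C (v (N + 1))) * nodal (Icc 1 N) v := by
  rw [nodal, prod_Icc_succ_top (by omega), mul_comm, nodal]

lemma C_mul_sub_C_mul_eq_C_mul_nodal {R ι : Type*} [CommRing R] [IsDomain R] {s : Finset ι}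
    {v : ι → R} (hv : Set.InjOn v s) {P Q : R[X]} (hP : P.Monic) (hQ : Q.Monic)
    (hPs : P.natDegree = #s) (hQs : Q.natDegree = #s) {a b : R}
    (hroot : ∀ i ∈ s, a * P.eval (v i) = b * Q.eval (v i)) :
    C a * P - C b * Q = C (a - b) * nodal s v := by
  have degree_C_mul_sub_nodal_lt : ∀ (c : R) {T : R[X]}, T.Monic → T.natDegree = #s →
      (C c * (T - nodal s v)).degree < #s := fun c T hT hTs ↦ by
    have hdeg : T.degree = #s := by rw [degree_eq_natDegree hT.ne_zero, hTs]
    rw [C_mul']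
    refine (degree_smul_le _ _).trans_lt (hdeg ▸ degree_sub_lt_left ?_ hT.ne_zero ?_)
    · rw [hdeg, degree_nodal]
    · rw [hT.leadingCoeff, nodal_monic.leadingCoeff]
  refine eq_of_degree_sub_lt_of_eval_index_eq s hv ?_ fun i hi ↦ ?_
  · have hsplit : C a * P - C b * Q - C (a - b) * nodal s v =
        C a * (P - nodal s v) - C b * (Q - nodal s v) := by rw [C_sub]; ring
    rw [hsplit]
    exact (degree_sub_le _ _).trans_lt
      (max_lt (degree_C_mul_sub_nodal_lt a hP hPs) (degree_C_mul_sub_nodal_lt b hQ hQs))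
  · simp [eval_nodal_at_node hi, hroot i hi]

lemma exists_mem_Ioo_eval_eq_zero {P : ℝ[X]} {a b : ℝ} (hab : a < b)
    (hsign : P.eval a * P.eval b < 0) : ∃ x ∈ Set.Ioo a b, P.eval x = 0 := by
  rcases mul_neg_iff.mp hsign with ⟨ha, hb⟩ | ⟨ha, hb⟩
  · exact intermediate_value_Ioo' hab.le P.continuousOn ⟨hb, ha⟩
  · exact intermediate_value_Ioo hab.le P.continuousOn ⟨ha, hb⟩

lemma exists_gt_eval_eq_zero {P : ℝ[X]} {a : ℝ} (hdeg : 0 < P.degree)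
    (hlead : 0 ≤ P.leadingCoeff) (ha : P.eval a < 0) : ∃ x, a < x ∧ P.eval x = 0 := by
  have htop := P.tendsto_atTop_of_leadingCoeff_nonneg hdeg hlead
  obtain ⟨b, hb, hab⟩ :=
    ((htop.eventually_gt_atTop 0).and (Filter.eventually_gt_atTop a)).exists
  obtain ⟨x, hx, hx0⟩ := exists_mem_Ioo_eval_eq_zero hab (mul_neg_of_neg_of_pos ha hb)
  exact ⟨x, hx.1, hx0⟩

lemma exists_gt_mul_eval_eq_mul_eval {P Q : ℝ[X]} (hP : P.Monic) (hQ : Q.Monic)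
    (hdeg : P.natDegree = Q.natDegree) (hpos : 0 < P.natDegree) {a b x : ℝ} (hba : b < a)
    (hx : a * P.eval x < b * Q.eval x) : ∃ y, x < y ∧ a * P.eval y = b * Q.eval y := by
  have hcoeff : (C a * P - C b * Q).coeff P.natDegree = a - b := by
    rw [coeff_sub, coeff_C_mul, coeff_C_mul, hP.coeff_natDegree, hdeg, hQ.coeff_natDegree,
      mul_one, mul_one]
  have hnatDegree : (C a * P - C b * Q).natDegree = P.natDegree :=
    natDegree_eq_of_le_of_coeff_ne_zero
      ((natDegree_sub_le _ _).trans (max_le (natDegree_C_mul_le _ _)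
        ((natDegree_C_mul_le _ _).trans hdeg.ge)))
      (hcoeff ▸ (sub_pos.mpr hba).ne')
  obtain ⟨y, hxy, hy⟩ := exists_gt_eval_eq_zero (P := C a * P - C b * Q) (a := x)
    (natDegree_pos_iff_degree_pos.mp (hnatDegree ▸ hpos))
    (by rw [leadingCoeff, hnatDegree, hcoeff]; exact (sub_pos.mpr hba).le)
    (by simpa using hx)
  exact ⟨y, hxy, by simpa [sub_eq_zero] using hy⟩

lemma neg_one_pow_mul_eval_nodal_pos {N i : ℕ} {v : ℕ → ℝ} {x : ℝ} (hi : i ≤ N)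
    (hbelow : ∀ j, 1 ≤ j → j ≤ i → v j < x) (habove : ∀ j, i < j → j ≤ N → x < v j) :
    0 < (-1) ^ (N - i) * (nodal (Icc 1 N) v).eval x := by
  induction N, hi using Nat.le_induction with
  | base =>
    rw [Nat.sub_self, pow_zero, one_mul, eval_nodal]
    exact prod_pos fun j hj ↦ sub_pos.mpr (hbelow j (mem_Icc.mp hj).1 (mem_Icc.mp hj).2)
  | succ N hi ih =>
    have hlast : 0 < v (N + 1) - x := sub_pos.mpr (habove (N + 1) (by omega) le_rfl)
    have hrest := ih fun j hij hjN ↦ habove j hij (by omega)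
    rw [Nat.succ_sub hi, pow_succ, nodal_Icc_add_one, eval_mul, eval_sub, eval_X, eval_C]
    calc 0 < (v (N + 1) - x) * ((-1) ^ (N - i) * (nodal (Icc 1 N) v).eval x) :=
          mul_pos hlast hrest
      _ = _ := by ring

lemma mul_pos_of_neg_one_pow_mul_pos {e : ℕ} {a b : ℝ} (ha : 0 < (-1) ^ e * a)
    (hb : 0 < (-1) ^ e * b) : 0 < a * b := by
  have := mul_pos ha hb
  rwa [mul_mul_mul_comm, ← mul_pow, neg_one_mul, neg_neg, one_pow, one_mul] at this

lemma pow_card_le_abs_eval_nodal {ι : Type*} {s : Finset ι} {v : ι → ℝ} {D x : ℝ} (hD : 0 ≤ D)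
    (h : ∀ j ∈ s, D ≤ |x - v j|) : D ^ #s ≤ |(nodal s v).eval x| := by
  rw [eval_nodal, abs_prod, ← prod_const]
  exact prod_le_prod (fun _ _ ↦ hD) h

lemma abs_eval_nodal_le_pow_card {ι : Type*} {s : Finset ι} {v : ι → ℝ} {L x : ℝ}
    (h : ∀ j ∈ s, |x - v j| ≤ L) : |(nodal s v).eval x| ≤ L ^ #s := by
  rw [eval_nodal, abs_prod, ← prod_const]
  exact prod_le_prod (fun _ _ ↦ abs_nonneg _) h

lemma abs_eval_nodal_eq_mul_erase {ι : Type*} [DecidableEq ι] {s : Finset ι} {i : ι} (hi : i ∈ s)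
    (v : ι → ℝ) (x : ℝ) :
    |(nodal s v).eval x| = |x - v i| * |(nodal (s.erase i) v).eval x| := by
  rw [nodal_eq_mul_nodal_erase hi, eval_mul, abs_mul, eval_sub, eval_X, eval_C]

/-! ### Interlacing sequences -/

/-- The interlacing `α 1 < β 1 < α 2 < β 2 < ⋯ < α N < β N < α (N + 1)`. Sequences are indexed from
`1`, and their values outside the ranges shown are irrelevant. -/
structure Interlaces {R : Type*} [Preorder R] (N : ℕ) (α β : ℕ → R) : Prop where
  left_lt_right : ∀ {i}, 1 ≤ i → i ≤ N → α i < β i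
  right_lt_left_succ : ∀ {i}, 1 ≤ i → i ≤ N → β i < α (i + 1)

namespace Interlaces

section Order

variable {R : Type*} [Preorder R] {N i j : ℕ} {α β : ℕ → R}

lemma strictMonoOn_left (h : Interlaces N α β) : StrictMonoOn α (Set.Icc 1 (N + 1)) :=
  strictMonoOn_of_lt_add_one Set.ordConnected_Icc fun _ _ hi hi' ↦
    have hiN := Nat.le_of_lt_succ hi'.2
    (h.left_lt_right hi.1 hiN).trans (h.right_lt_left_succ hi.1 hiN)

lemma left_le_left (h : Interlaces N α β) (hi : 1 ≤ i) (hij : i ≤ j) (hj : j ≤ N + 1) :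
    α i ≤ α j :=
  h.strictMonoOn_left.monotoneOn ⟨hi, hij.trans hj⟩ ⟨hi.trans hij, hj⟩ hij

lemma left_lt_right_of_le (h : Interlaces N α β) (hi : 1 ≤ i) (hij : i ≤ j) (hj : j ≤ N) :
    α i < β j :=
  (h.left_le_left hi hij (by omega)).trans_lt (h.left_lt_right (hi.trans hij) hj)

lemma right_lt_left_of_lt (h : Interlaces N α β) (hi : 1 ≤ i) (hij : i < j) (hj : j ≤ N + 1) :
    β i < α j :=
  (h.right_lt_left_succ hi (by omega)).trans_le (h.left_le_left (by omega) hij hj)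

lemma right_le_right (h : Interlaces N α β) (hi : 1 ≤ i) (hij : i ≤ j) (hj : j ≤ N) :
    β i ≤ β j := by
  rcases hij.eq_or_lt with rfl | hlt
  · exact le_rfl
  · exact ((h.right_lt_left_of_lt hi hlt (by omega)).trans (h.left_lt_right (by omega) hj)).le

lemma move_left {α' : ℕ → R} (h : Interlaces N α β)
    (hα' : ∀ i, 1 ≤ i → i ≤ N → α i < α' i ∧ α' i < β i) (hlast : α (N + 1) < α' (N + 1)) :
    Interlaces N α' β where
  left_lt_right hi hiN := (hα' _ hi hiN).2
  right_lt_left_succ {i} hi hiN := by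
    refine (h.right_lt_left_succ hi hiN).trans ?_
    rcases hiN.eq_or_lt with rfl | hlt
    · exact hlast
    · exact (hα' (i + 1) (by omega) hlt).1

lemma interlaces_left_succ {β' : ℕ → R} (h : Interlaces (N + 1) α β)
    (hβ' : ∀ i, 1 ≤ i → i ≤ N → β i < β' i ∧ β' i < α (i + 1)) (hlast : β' (N + 1) = α (N + 2)) :
    Interlaces N β' (fun i ↦ α (i + 1)) where
  left_lt_right hi hiN := (hβ' _ hi hiN).2
  right_lt_left_succ {i} hi hiN := by
    have hαβ := h.left_lt_right (i := i + 1) (by omega) (by omega)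
    rcases hiN.eq_or_lt with rfl | hlt
    · exact hlast ▸ hαβ.trans (h.right_lt_left_succ (by omega) le_rfl)
    · exact hαβ.trans (hβ' (i + 1) (by omega) hlt).1

end Order

variable {N i : ℕ} {α β : ℕ → ℝ}

lemma eval_nodal_right_mul_eval_nodal_left_pos (h : Interlaces N α β) (hi : 1 ≤ i) (hiN : i ≤ N) :
    0 < (nodal (Icc 1 N) β).eval (α i) * (nodal (Icc 1 (N + 1)) α).eval (β i) := by
  have hβ : 0 < (-1) ^ (N - (i - 1)) * (nodal (Icc 1 N) β).eval (α i) :=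
    neg_one_pow_mul_eval_nodal_pos (by omega)
      (fun j hj hji ↦ h.right_lt_left_of_lt hj (by omega) (by omega))
      (fun j hij hj ↦ h.left_lt_right_of_le hi (by omega) hj)
  have hα : 0 < (-1) ^ (N + 1 - i) * (nodal (Icc 1 (N + 1)) α).eval (β i) :=
    neg_one_pow_mul_eval_nodal_pos (by omega)
      (fun j hj hji ↦ h.left_lt_right_of_le hj hji hiN)
      (fun j hij hj ↦ h.right_lt_left_of_lt hi hij hj)
  rw [show N - (i - 1) = N + 1 - i by omega] at hβ
  exact mul_pos_of_neg_one_pow_mul_pos hβ hα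

lemma eval_nodal_left_mul_eval_nodal_right_pos (h : Interlaces N α β) (hi : 1 ≤ i) (hiN : i < N) :
    0 < (nodal (Icc 1 N) α).eval (β i) * (nodal (Icc 1 N) β).eval (α (i + 1)) := by
  have hα : 0 < (-1) ^ (N - i) * (nodal (Icc 1 N) α).eval (β i) :=
    neg_one_pow_mul_eval_nodal_pos hiN.le
      (fun j hj hji ↦ h.left_lt_right_of_le hj hji hiN.le)
      (fun j hij hj ↦ h.right_lt_left_of_lt hi hij (by omega))
  have hβ : 0 < (-1) ^ (N - i) * (nodal (Icc 1 N) β).eval (α (i + 1)) :=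
    neg_one_pow_mul_eval_nodal_pos hiN.le
      (fun j hj hji ↦ h.right_lt_left_of_lt hj (by omega) (by omega))
      (fun j hij hj ↦ h.left_lt_right_of_le (by omega) hij hj)
  exact mul_pos_of_neg_one_pow_mul_pos hα hβ

lemma exists_mem_Ioo_mul_eval_nodal_eq (h : Interlaces N α β) (hα : 0 < α 1) {K c : ℝ}
    (hK : 0 < K) (hc : 0 < c) (hi : 1 ≤ i) (hiN : i ≤ N) :
    ∃ x ∈ Set.Ioo (α i) (β i),
      K * (nodal (Icc 1 (N + 1)) α).eval x = c * (X * nodal (Icc 1 N) β).eval x := by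
  have hα_node : (nodal (Icc 1 (N + 1)) α).eval (α i) = 0 :=
    eval_nodal_at_node (mem_Icc.mpr ⟨hi, by omega⟩)
  have hβ_node : (nodal (Icc 1 N) β).eval (β i) = 0 :=
    eval_nodal_at_node (mem_Icc.mpr ⟨hi, hiN⟩)
  obtain ⟨x, hx, hx0⟩ := exists_mem_Ioo_eval_eq_zero
    (P := C K * nodal (Icc 1 (N + 1)) α - C c * (X * nodal (Icc 1 N) β))
    (h.left_lt_right hi hiN) (by
      have hαi : 0 < α i := hα.trans_le (h.left_le_left le_rfl hi (by omega))
      have hpos := mul_pos (mul_pos (mul_pos hK hc) hαi)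
        (h.eval_nodal_right_mul_eval_nodal_left_pos hi hiN)
      simp only [eval_sub, eval_mul, eval_C, eval_X, hα_node, hβ_node]
      linarith)
  exact ⟨x, hx, by simpa [sub_eq_zero] using hx0⟩

lemma exists_gt_mul_eval_nodal_eq (h : Interlaces N α β) (hα : 0 < α 1) {K c : ℝ} (hc : 0 < c)
    (hcK : c < K) :
    ∃ x, α (N + 1) < x ∧
      K * (nodal (Icc 1 (N + 1)) α).eval x = c * (X * nodal (Icc 1 N) β).eval x := by
  refine exists_gt_mul_eval_eq_mul_eval nodal_monic (monic_X.mul nodal_monic)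
    (by simp [natDegree_X_mul nodal_ne_zero]) (by simp) hcK ?_
  have hlast : 0 < α (N + 1) := hα.trans_le (h.left_le_left le_rfl (by omega) le_rfl)
  have hβ : 0 < (nodal (Icc 1 N) β).eval (α (N + 1)) := by
    rw [eval_nodal]
    refine prod_pos fun j hj ↦ sub_pos.mpr ?_
    obtain ⟨hj, hjN⟩ := mem_Icc.mp hj
    exact h.right_lt_left_of_lt hj (by omega) le_rfl
  rw [eval_nodal_at_node (mem_Icc.mpr ⟨by omega, le_rfl⟩), mul_zero, eval_mul, eval_X]
  positivity

lemma exists_mul_nodal_left_sub_eq (h : Interlaces N α β) (hα : 0 < α 1) {K c : ℝ} (hc : 0 < c)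
    (hcK : c < K) :
    ∃ α' : ℕ → ℝ, (∀ i, 1 ≤ i → i ≤ N → α i < α' i ∧ α' i < β i) ∧ α (N + 1) < α' (N + 1) ∧
      C K * nodal (Icc 1 (N + 1)) α - C c * (X * nodal (Icc 1 N) β) =
        C (K - c) * nodal (Icc 1 (N + 1)) α' := by
  have hroot : ∀ i ∈ Icc 1 (N + 1), ∃ x, (i ≤ N → α i < x ∧ x < β i) ∧
      (i = N + 1 → α (N + 1) < x) ∧
      K * (nodal (Icc 1 (N + 1)) α).eval x = c * (X * nodal (Icc 1 N) β).eval x := fun i hi ↦ by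
    obtain ⟨hi, hiN⟩ := mem_Icc.mp hi
    rcases hiN.eq_or_lt with rfl | hlt
    · obtain ⟨x, hx, hx0⟩ := h.exists_gt_mul_eval_nodal_eq hα hc hcK
      exact ⟨x, by omega, fun _ ↦ hx, hx0⟩
    · obtain ⟨x, hx, hx0⟩ :=
        h.exists_mem_Ioo_mul_eval_nodal_eq hα (hc.trans hcK) hc hi (Nat.le_of_lt_succ hlt)
      exact ⟨x, fun _ ↦ hx, by omega, hx0⟩
  choose! α' hα'_mem hα'_last hα'_root using hroot
  have hmem : ∀ i, 1 ≤ i → i ≤ N → α i < α' i ∧ α' i < β i := fun i hi hiN ↦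
    hα'_mem i (mem_Icc.mpr ⟨hi, by omega⟩) hiN
  have hlast : α (N + 1) < α' (N + 1) := hα'_last _ (mem_Icc.mpr ⟨by omega, le_rfl⟩) rfl
  have hinj : Set.InjOn α' (Icc 1 (N + 1)) := by
    simpa using (h.move_left hmem hlast).strictMonoOn_left.injOn
  exact ⟨α', hmem, hlast, C_mul_sub_C_mul_eq_C_mul_nodal hinj nodal_monic
    (monic_X.mul nodal_monic) (by simp) (by simp [natDegree_X_mul nodal_ne_zero]) hα'_root⟩

lemma eval_nodal_right_div_mem_Ioo (h : Interlaces N α β) (hN : N ≠ 0) :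
    (nodal (Icc 1 N) β).eval (α (N + 1)) / (nodal (Icc 1 N) α).eval (α (N + 1)) ∈
      Set.Ioo (0 : ℝ) 1 := by
  have hβ : ∀ j ∈ Icc 1 N, 0 < α (N + 1) - β j := fun j hj ↦ by
    obtain ⟨hj, hjN⟩ := mem_Icc.mp hj
    exact sub_pos.mpr (h.right_lt_left_of_lt hj (by omega) le_rfl)
  have hαβ : ∀ j ∈ Icc 1 N, α (N + 1) - β j < α (N + 1) - α j := fun j hj ↦ by
    obtain ⟨hj, hjN⟩ := mem_Icc.mp hj
    exact sub_lt_sub_left (h.left_lt_right hj hjN) _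
  have hα_pos := prod_pos fun j hj ↦ (hβ j hj).trans (hαβ j hj)
  rw [eval_nodal, eval_nodal]
  exact ⟨div_pos (prod_pos hβ) hα_pos, (div_lt_one hα_pos).mpr <| prod_lt_prod_of_nonempty hβ hαβ
    ⟨1, mem_Icc.mpr ⟨le_rfl, Nat.one_le_iff_ne_zero.mpr hN⟩⟩⟩

lemma exists_mem_Ioo_eval_nodal_right_eq (h : Interlaces N α β) {r : ℝ} (hr : 0 < r) (hi : 1 ≤ i)
    (hiN : i < N) :
    ∃ x ∈ Set.Ioo (β i) (α (i + 1)),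
      (nodal (Icc 1 N) β).eval x = r * (nodal (Icc 1 N) α).eval x := by
  have hα_node : (nodal (Icc 1 N) α).eval (α (i + 1)) = 0 :=
    eval_nodal_at_node (mem_Icc.mpr ⟨by omega, hiN⟩)
  have hβ_node : (nodal (Icc 1 N) β).eval (β i) = 0 :=
    eval_nodal_at_node (mem_Icc.mpr ⟨hi, hiN.le⟩)
  obtain ⟨x, hx, hx0⟩ := exists_mem_Ioo_eval_eq_zero
    (P := nodal (Icc 1 N) β - C r * nodal (Icc 1 N) α) (h.right_lt_left_succ hi hiN.le) (by
      have hpos := mul_pos hr (h.eval_nodal_left_mul_eval_nodal_right_pos hi hiN)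
      simp only [eval_sub, eval_mul, eval_C, hα_node, hβ_node]
      linarith)
  exact ⟨x, hx, by simpa [sub_eq_zero] using hx0⟩

lemma exists_nodal_right_sub_mul_eq (h : Interlaces (N + 1) α β) :
    ∃ r ∈ Set.Ioo (0 : ℝ) 1, ∃ β' : ℕ → ℝ,
      (∀ i, 1 ≤ i → i ≤ N → β i < β' i ∧ β' i < α (i + 1)) ∧
      nodal (Icc 1 (N + 1)) β - C r * nodal (Icc 1 (N + 1)) α =
        C (1 - r) * ((X - C (α (N + 2))) * nodal (Icc 1 N) β') := by
  set F := nodal (Icc 1 (N + 1)) α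
  set G := nodal (Icc 1 (N + 1)) β
  obtain ⟨hr0, hr1⟩ := h.eval_nodal_right_div_mem_Ioo N.succ_ne_zero
  set r := G.eval (α (N + 2)) / F.eval (α (N + 2))
  have hlast : G.eval (α (N + 2)) = r * F.eval (α (N + 2)) :=
    (div_mul_cancel₀ _ fun h0 ↦ hr0.ne' (by simp [r, h0])).symm
  have hroot : ∀ i ∈ Icc 1 (N + 1), ∃ x, (i ≤ N → β i < x ∧ x < α (i + 1)) ∧
      (i = N + 1 → x = α (N + 2)) ∧ 1 * G.eval x = r * F.eval x := fun i hi ↦ by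
    simp only [one_mul]
    obtain ⟨hi, hiN⟩ := mem_Icc.mp hi
    rcases hiN.eq_or_lt with rfl | hlt
    · exact ⟨α (N + 2), by omega, fun _ ↦ rfl, hlast⟩
    · obtain ⟨x, hx, hx0⟩ := h.exists_mem_Ioo_eval_nodal_right_eq hr0 hi hlt
      exact ⟨x, fun _ ↦ hx, by omega, hx0⟩
  choose! β' hβ'_mem hβ'_last hβ'_root using hroot
  have hmem : ∀ i, 1 ≤ i → i ≤ N → β i < β' i ∧ β' i < α (i + 1) := fun i hi hiN ↦
    hβ'_mem i (mem_Icc.mpr ⟨hi, by omega⟩) hiN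
  have hβ'_last : β' (N + 1) = α (N + 2) := hβ'_last _ (mem_Icc.mpr ⟨by omega, le_rfl⟩) rfl
  have hinj : Set.InjOn β' (Icc 1 (N + 1)) := by
    simpa using (h.interlaces_left_succ hmem hβ'_last).strictMonoOn_left.injOn
  have hid := C_mul_sub_C_mul_eq_C_mul_nodal hinj nodal_monic nodal_monic (by simp) (by simp)
    hβ'_root
  rw [C_1, one_mul, nodal_Icc_add_one N β', hβ'_last] at hid
  exact ⟨r, ⟨hr0, hr1⟩, β', hmem, hid⟩

/-! ### Estimates for the moved roots -/

lemma add_le_left_of_lt (h : Interlaces N α β) {D : ℝ}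
    (hgap : ∀ i, 1 ≤ i → i ≤ N → β i + D ≤ α (i + 1)) {j : ℕ} (hi : 1 ≤ i) (hij : i < j)
    (hj : j ≤ N + 1) : β i + D ≤ α j :=
  (hgap i hi (by omega)).trans (h.left_le_left (by omega) hij hj)

lemma pow_le_abs_eval_nodal_erase_left (h : Interlaces N α β) {D x : ℝ} (hD : 0 ≤ D)
    (hgap : ∀ i, 1 ≤ i → i ≤ N → β i + D ≤ α (i + 1)) (hi : 1 ≤ i) (hiN : i ≤ N)
    (hx : x ∈ Set.Ioo (α i) (β i)) :
    D ^ N ≤ |(nodal ((Icc 1 (N + 1)).erase i) α).eval x| := by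
  have hcard : #((Icc 1 (N + 1)).erase i) = N := by
    rw [card_erase_of_mem (mem_Icc.mpr ⟨hi, by omega⟩)]; simp
  rw [show D ^ N = D ^ #((Icc 1 (N + 1)).erase i) by rw [hcard]]
  refine pow_card_le_abs_eval_nodal hD fun j hj ↦ ?_
  obtain ⟨hji, hj⟩ := mem_erase.mp hj
  obtain ⟨hj, hjN⟩ := mem_Icc.mp hj
  rcases hji.lt_or_gt with hlt | hlt
  · have := h.add_le_left_of_lt hgap hj hlt (by omega)
    exact le_abs.mpr (.inl (by linarith [hx.1, h.left_lt_right hj (by omega)]))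
  · have := h.add_le_left_of_lt hgap hi hlt hjN
    exact le_abs.mpr (.inr (by linarith [hx.2]))

lemma abs_eval_nodal_erase_right_le_pow (h : Interlaces N α β) (hα : 0 < α 1) {L x : ℝ}
    (hL : α (N + 1) ≤ L) (hi : 1 ≤ i) (hiN : i ≤ N) (hx : x ∈ Set.Ioo (α i) (β i)) :
    |(nodal ((Icc 1 N).erase i) β).eval x| ≤ L ^ (N - 1) := by
  have hcard : #((Icc 1 N).erase i) = N - 1 := by
    rw [card_erase_of_mem (mem_Icc.mpr ⟨hi, hiN⟩)]; simp
  rw [← hcard]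
  refine abs_eval_nodal_le_pow_card fun j hj ↦ ?_
  obtain ⟨hj, hjN⟩ := mem_Icc.mp (mem_of_mem_erase hj)
  have hxL := (hx.2.trans (h.right_lt_left_of_lt hi (by omega) le_rfl)).trans_le hL
  have hβL := (h.right_lt_left_of_lt hj (by omega) le_rfl).trans_le hL
  have hβ := hα.trans (h.left_lt_right_of_le le_rfl hj hjN)
  have hαi := hα.trans_le (h.left_le_left le_rfl hi (by omega))
  exact abs_le.mpr ⟨by linarith [hx.1], by linarith⟩

lemma sub_left_le_right_sub (h : Interlaces N α β) (hα : 0 < α 1) {D L K c x : ℝ} (hD : 0 < D)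
    (hgap : ∀ i, 1 ≤ i → i ≤ N → β i + D ≤ α (i + 1)) (hL : α (N + 1) ≤ L) (hc : 0 < c)
    (hcK : c * L ^ N ≤ K * D ^ N) (hi : 1 ≤ i) (hiN : i ≤ N) (hx : x ∈ Set.Ioo (α i) (β i))
    (hroot : K * (nodal (Icc 1 (N + 1)) α).eval x = c * (X * nodal (Icc 1 N) β).eval x) :
    x - α i ≤ β i - x := by
  have hxα : 0 < x - α i := sub_pos.mpr hx.1
  have hxβ : 0 < β i - x := sub_pos.mpr hx.2
  have hx0 : 0 < x := (hα.trans_le (h.left_le_left le_rfl hi (by omega))).trans hx.1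
  have hxL : x ≤ L := ((hx.2.trans (h.right_lt_left_of_lt hi (by omega) le_rfl)).trans_le hL).le
  have hL0 : 0 < L := hx0.trans_le hxL
  have hK : 0 < K :=
    pos_of_mul_pos_left (lt_of_lt_of_le (by positivity) hcK) (pow_pos hD N).le
  have hroot_abs : K * |(nodal (Icc 1 (N + 1)) α).eval x| =
      c * (x * |(nodal (Icc 1 N) β).eval x|) := by
    have := congrArg abs hroot
    rwa [eval_mul, eval_X, abs_mul, abs_mul, abs_mul, abs_of_pos hK, abs_of_pos hc,
      abs_of_pos hx0] at this
  rw [abs_eval_nodal_eq_mul_erase (mem_Icc.mpr ⟨hi, by omega⟩),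
    abs_eval_nodal_eq_mul_erase (mem_Icc.mpr ⟨hi, hiN⟩), abs_of_pos hxα, abs_sub_comm,
    abs_of_pos hxβ] at hroot_abs
  have hlower := h.pow_le_abs_eval_nodal_erase_left hD.le hgap hi hiN hx
  have hupper := h.abs_eval_nodal_erase_right_le_pow hα hL hi hiN hx
  refine le_of_mul_le_mul_left ?_ (show 0 < K * D ^ N by positivity)
  calc K * D ^ N * (x - α i)
      = K * ((x - α i) * D ^ N) := by ring
    _ ≤ K * ((x - α i) * |(nodal ((Icc 1 (N + 1)).erase i) α).eval x|) := by gcongr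
    _ = c * (x * ((β i - x) * |(nodal ((Icc 1 N).erase i) β).eval x|)) := hroot_abs
    _ ≤ c * (L * ((β i - x) * L ^ (N - 1))) := by gcongr
    _ = c * L ^ N * (β i - x) := by
      rw [← mul_pow_sub_one (Nat.ne_zero_of_lt (hi.trans hiN)) L]; ring
    _ ≤ K * D ^ N * (β i - x) := by gcongr

lemma prod_Icc_div_lt_one (h : Interlaces N α β) {r x : ℝ} (hr : r < 1) (hi : 1 ≤ i) (hiN : i < N)
    (hx : x ∈ Set.Ioo (β i) (α (i + 1)))
    (hroot : (nodal (Icc 1 N) β).eval x = r * (nodal (Icc 1 N) α).eval x) :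
    ∏ j ∈ Icc 1 (i + 1), (x - β j) / (x - α j) < 1 := by
  have hbelow : ∀ j, 1 ≤ j → j ≤ i → β j < x ∧ α j < x := fun j hj hji ↦
    ⟨(h.right_le_right hj hji hiN.le).trans_lt hx.1,
      (h.left_lt_right_of_le hj hji hiN.le).trans hx.1⟩
  have habove : ∀ j, i < j → j ≤ N → x < α j ∧ α j < β j := fun j hij hj ↦
    ⟨hx.2.trans_le (h.left_le_left (by omega) hij (by omega)), h.left_lt_right (by omega) hj⟩
  have hne : (nodal (Icc 1 N) α).eval x ≠ 0 := eval_nodal_not_at_node fun j hj ↦ by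
    obtain ⟨hj, hjN⟩ := mem_Icc.mp hj
    rcases le_or_gt j i with hji | hij
    · exact (hbelow j hj hji).2.ne'
    · exact (habove j hij hjN).1.ne
  calc ∏ j ∈ Icc 1 (i + 1), (x - β j) / (x - α j)
      ≤ ∏ j ∈ Icc 1 N, (x - β j) / (x - α j) := by
        refine prod_le_prod_of_subset_of_one_le (Icc_subset_Icc_right hiN) (fun j hj ↦ ?_)
          fun j hj hji ↦ ?_
        · obtain ⟨hj, hji⟩ := mem_Icc.mp hj
          rcases hji.eq_or_lt with rfl | hlt
          · obtain ⟨hxα, hαβ⟩ := habove (i + 1) (by omega) hiN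
            exact div_nonneg_of_nonpos (by linarith) (by linarith)
          · obtain ⟨hβx, hαx⟩ := hbelow j hj (by omega)
            exact div_nonneg (by linarith) (by linarith)
        · simp only [mem_Icc, not_and, not_le] at hj hji
          obtain ⟨hxα, hαβ⟩ := habove j (by have := hji hj.1; omega) hj.2
          exact (one_le_div_of_neg (by linarith)).mpr (by linarith)
    _ = r := by
      rw [prod_div_distrib, ← eval_nodal, ← eval_nodal, hroot, mul_div_cancel_right₀ _ hne]
    _ < 1 := hr

lemma div_lt_sum_div (h : Interlaces N α β) {r x : ℝ} (hr : r < 1) (hi : 1 ≤ i) (hiN : i < N)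
    (hx : x ∈ Set.Ioo (β i) (α (i + 1)))
    (hroot : (nodal (Icc 1 N) β).eval x = r * (nodal (Icc 1 N) α).eval x) :
    (β (i + 1) - α (i + 1)) / (β (i + 1) - x) < ∑ j ∈ Icc 1 i, (β j - α j) / (x - α j) := by
  have hratio : ∀ j ∈ Icc 1 i, 0 < x - α j ∧ 0 ≤ (β j - α j) / (x - α j) ∧
      (β j - α j) / (x - α j) ≤ 1 := fun j hj ↦ by
    obtain ⟨hj, hji⟩ := mem_Icc.mp hj
    have hαβ := h.left_lt_right hj (by omega)
    have hβx : β j < x := (h.right_le_right hj hji hiN.le).trans_lt hx.1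
    have hαx := sub_pos.mpr (hαβ.trans hβx)
    exact ⟨hαx, div_nonneg (by linarith) hαx.le, (div_le_one hαx).mpr (by linarith)⟩
  have hxα : 0 < α (i + 1) - x := sub_pos.mpr hx.2
  have hxβ : 0 < β (i + 1) - x := hxα.trans (sub_lt_sub_right (h.left_lt_right (by omega) hiN) x)
  have hprod : (∏ j ∈ Icc 1 i, (1 - (β j - α j) / (x - α j))) *
      ((β (i + 1) - x) / (α (i + 1) - x)) < 1 := by
    rw [← neg_div_neg_eq (β (i + 1) - x), neg_sub, neg_sub]
    refine lt_of_eq_of_lt ?_ (h.prod_Icc_div_lt_one hr hi hiN hx hroot)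
    rw [prod_Icc_succ_top (by omega)]
    congr 1
    refine prod_congr rfl fun j hj ↦ ?_
    rw [one_sub_div (hratio j hj).1.ne', sub_sub_sub_cancel_right]
  have hsum := one_sub_sum_le_prod_one_sub (fun j hj ↦ (hratio j hj).2.1)
    (fun j hj ↦ (hratio j hj).2.2)
  rw [mul_div_assoc', div_lt_one hxα, ← lt_div_iff₀ hxβ] at hprod
  have hsplit : (α (i + 1) - x) / (β (i + 1) - x) =
      1 - (β (i + 1) - α (i + 1)) / (β (i + 1) - x) := by
    rw [one_sub_div hxβ.ne']; ring
  linarith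

lemma sum_div_le_div_add {α' : ℕ → ℝ} (h : Interlaces N α β) {D L w x : ℝ} (hD : 0 < D)
    (hL : 0 < L) (hw : 0 ≤ w) (hgap : ∀ i, 1 ≤ i → i ≤ N → β i + D ≤ α (i + 1))
    (hα' : ∀ j, 1 ≤ j → j ≤ N → α j < α' j ∧ α' j < β j) (hi : 1 ≤ i) (hiN : i < N)
    (hsmall : ∀ j, 1 ≤ j → j < i → 4 * N * L * (β j - α j) ≤ D * w) (hx : β i < x) :
    ∑ j ∈ Icc 1 i, (β j - α' j) / (x - α' j) ≤ (β i - α' i) / (x - α' i) + w / (4 * L) := by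
  obtain ⟨e, rfl⟩ := Nat.exists_eq_add_of_le' hi
  have hN : (0 : ℝ) < N := by exact_mod_cast (by omega : 0 < N)
  have hterm : ∀ j ∈ Icc 1 e, (β j - α' j) / (x - α' j) ≤ w / (4 * N * L) := fun j hj ↦ by
    obtain ⟨hj, hje⟩ := mem_Icc.mp hj
    have hfar := h.add_le_left_of_lt hgap hj (Nat.lt_succ_of_le hje) (by omega)
    have hαβ := h.left_lt_right (i := e + 1) (by omega) hiN.le
    obtain ⟨hlo, hhi⟩ := hα' j hj (by omega)
    calc (β j - α' j) / (x - α' j) ≤ (β j - α j) / D := by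
          apply div_le_div₀ <;> linarith
      _ ≤ w / (4 * N * L) := by
        rw [div_le_div_iff₀ hD (by positivity)]
        linarith [hsmall j hj (Nat.lt_succ_of_le hje)]
  rw [sum_Icc_succ_top (by omega), add_comm]
  gcongr
  calc ∑ j ∈ Icc 1 e, (β j - α' j) / (x - α' j) ≤ e * (w / (4 * N * L)) := by
        simpa using sum_le_card_nsmul _ _ _ hterm
    _ ≤ N * (w / (4 * N * L)) := by gcongr; omega
    _ = w / (4 * L) := by field_simp

lemma sub_left_mul_le {α' : ℕ → ℝ} (h : Interlaces N α β) (hα : 0 < α 1) {D L r x : ℝ} (hD : 0 < D)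
    (hgap : ∀ i, 1 ≤ i → i ≤ N → β i + D ≤ α (i + 1)) (hL : α (N + 1) ≤ L)
    (h' : Interlaces N α' β) (hα' : ∀ j, 1 ≤ j → j ≤ N → α j < α' j)
    (hi : 1 ≤ i) (hiN : i < N) (hmid : α' (i + 1) - α (i + 1) ≤ β (i + 1) - α' (i + 1))
    (hsmall : ∀ j, 1 ≤ j → j < i → 4 * N * L * (β j - α j) ≤ D * (β (i + 1) - α (i + 1)))
    (hr : r < 1) (hx : x ∈ Set.Ioo (β i) (α' (i + 1)))
    (hroot : (nodal (Icc 1 N) β).eval x = r * (nodal (Icc 1 N) α').eval x) :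
    (x - α' i) * (β (i + 1) - α (i + 1)) ≤ 4 * L * (β i - α i) := by
  have hαi := hα' i hi hiN.le
  have hα'i := h'.left_lt_right hi hiN.le
  have hx0 : 0 < x := (hα.trans (h.left_lt_right_of_le le_rfl hi hiN.le)).trans hx.1
  have hxβ : x < β (i + 1) := hx.2.trans (h'.left_lt_right (by omega) hiN)
  have hβL : β (i + 1) < L := (h.right_lt_left_of_lt (by omega) (by omega) le_rfl).trans_le hL
  have hL0 : 0 < L := by linarith
  have hxα' : 0 < x - α' i := sub_pos.mpr (hα'i.trans hx.1)
  set w := β (i + 1) - α (i + 1)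
  have hw : 0 < w := sub_pos.mpr (h.left_lt_right (by omega) hiN)
  have hlower : w / (2 * L) ≤ (β (i + 1) - α' (i + 1)) / (β (i + 1) - x) := by
    rw [div_le_div_iff₀ (by positivity) (sub_pos.mpr hxβ)]
    calc w * (β (i + 1) - x) ≤ (2 * (β (i + 1) - α' (i + 1))) * L := by gcongr <;> linarith
      _ = _ := by ring
  have hsum := (h'.div_lt_sum_div hr hi hiN hx hroot).trans_le
    (h.sum_div_le_div_add hD hL0 hw.le hgap
      (fun j hj hjN ↦ ⟨hα' j hj hjN, h'.left_lt_right hj hjN⟩) hi hiN hsmall hx.1)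
  have hmain : w / (4 * L) < (β i - α' i) / (x - α' i) := by
    have : w / (2 * L) = 2 * (w / (4 * L)) := by field_simp; norm_num
    linarith
  rw [div_lt_div_iff₀ (by positivity) hxα'] at hmain
  calc (x - α' i) * w ≤ (β i - α' i) * (4 * L) := by linarith
    _ ≤ (β i - α i) * (4 * L) := by gcongr
    _ = 4 * L * (β i - α i) := by ring

end Interlaces

/-! ### The constants -/

section Constants

variable {n m i j : ℕ} {lam : ℕ → ℝ}

lemma del_pos (hm : 2 ≤ m) (hmono : ∀ i, 1 ≤ i → i < m → lam i < lam (i + 1)) :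
    0 < Del m lam := by
  have hgaps : ((fun i ↦ lam (i + 1) - lam i) '' Set.Icc 1 (m - 1)).Nonempty :=
    ⟨_, 1, ⟨le_rfl, by omega⟩, rfl⟩
  obtain ⟨i, ⟨hi, him⟩, hmin⟩ := hgaps.csInf_mem ((Set.finite_Icc _ _).image _)
  have hgap : 0 < lam (i + 1) - lam i := sub_pos.mpr (hmono i hi (by omega))
  rw [Del, ← hmin]
  positivity

lemma del_le_half : Del m lam ≤ 1 / 2 :=
  mul_le_of_le_one_right one_half_pos.le (min_le_left _ _)

lemma del_le_one : Del m lam ≤ 1 :=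
  del_le_half.trans one_half_lt_one.le

lemma two_mul_del_le (hi : 1 ≤ i) (him : i < m) : 2 * Del m lam ≤ lam (i + 1) - lam i := by
  have hmin : sInf ((fun i ↦ lam (i + 1) - lam i) '' Set.Icc 1 (m - 1)) ≤ lam (i + 1) - lam i :=
    csInf_le ((Set.finite_Icc _ _).image _).bddBelow ⟨i, ⟨hi, by omega⟩, rfl⟩
  rw [Del, one_div, mul_inv_cancel_left₀ two_ne_zero]
  exact (min_le_right _ _).trans hmin

lemma cone_pos (hD : 0 < Del m lam) (hL : 1 ≤ Lamb m lam) : 0 < Cone n m lam :=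
  div_pos hD (by positivity)

lemma cone_le_del (hD : 0 < Del m lam) (hL : 1 ≤ Lamb m lam) : Cone n m lam ≤ Del m lam :=
  div_le_self hD.le (one_le_mul_of_one_le_of_one_le (one_le_pow₀ one_le_two) hL)

lemma eps_pos (hn : n ≠ 0) (hD : 0 < Del m lam) (hL : 1 ≤ Lamb m lam) : 0 < eps n m lam := by
  rw [eps]; positivity

lemma eps_le_one (hn : n ≠ 0) (hD : 0 < Del m lam) (hL : 1 ≤ Lamb m lam) : eps n m lam ≤ 1 := by
  have hn1 : (1 : ℝ) ≤ n := by exact_mod_cast Nat.one_le_iff_ne_zero.mpr hn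
  have hnum : Del m lam ^ (n ^ 2 + n + 1) ≤ 1 :=
    pow_le_one₀ hD.le del_le_one
  exact div_le_one_of_le₀ (hnum.trans <| one_le_mul_of_one_le_of_one_le
    (one_le_mul_of_one_le_of_one_le hn1 (one_le_pow₀ one_le_two)) (one_le_pow₀ hL)) (by positivity)

lemma rho_pos (hn : n ≠ 0) (hD : 0 < Del m lam) (hL : 1 ≤ Lamb m lam) (i : ℕ) :
    0 < rho n m lam i :=
  pow_pos (eps_pos hn hD hL) _

lemma rho_le_rho (hn : n ≠ 0) (hD : 0 < Del m lam) (hL : 1 ≤ Lamb m lam) (hij : i ≤ j) :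
    rho n m lam i ≤ rho n m lam j :=
  pow_le_pow_of_le_one (eps_pos hn hD hL).le (eps_le_one hn hD hL)
    (Nat.pow_le_pow_right n.succ_pos (Nat.sub_le_sub_left hij m))

lemma rho_le_eps (hn : n ≠ 0) (hD : 0 < Del m lam) (hL : 1 ≤ Lamb m lam) (i : ℕ) :
    rho n m lam i ≤ eps n m lam :=
  pow_le_of_le_one (eps_pos hn hD hL).le (eps_le_one hn hD hL) (by positivity)

lemma rho_eq_rho_succ_pow (him : i < m) : rho n m lam i = rho n m lam (i + 1) ^ (n + 1) := by
  rw [rho, rho, ← pow_mul, ← pow_succ, Nat.sub_add_eq, Nat.sub_add_cancel (by omega)]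

lemma rho_le_eps_mul_rho_succ (hn : n ≠ 0) (hD : 0 < Del m lam) (hL : 1 ≤ Lamb m lam)
    (him : i < m) : rho n m lam i ≤ eps n m lam * rho n m lam (i + 1) := by
  have hρ := rho_pos hn hD hL (i + 1)
  have hρε := rho_le_eps hn hD hL (i + 1)
  rw [rho_eq_rho_succ_pow him, pow_succ]
  gcongr
  exact (pow_le_of_le_one hρ.le (hρε.trans (eps_le_one hn hD hL)) hn).trans hρε

lemma ctwo_eq : Ctwo n m lam i = 2 ^ (2 * (n + 1) ^ 2) * Lamb m lam ^ (n + 1) /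
    (Del m lam ^ n * rho n m lam (i + 1)) := by
  rw [Ctwo, rho, Nat.sub_sub]

lemma one_le_ctwo (hn : n ≠ 0) (hD : 0 < Del m lam) (hL : 1 ≤ Lamb m lam) :
    1 ≤ Ctwo n m lam i := by
  have hρ := rho_pos hn hD hL (i + 1)
  have hρ1 := (rho_le_eps hn hD hL (i + 1)).trans (eps_le_one hn hD hL)
  rw [ctwo_eq, one_le_div (by positivity)]
  exact (mul_le_one₀ (pow_le_one₀ hD.le del_le_one) hρ.le hρ1).trans
    (one_le_mul_of_one_le_of_one_le (one_le_pow₀ one_le_two) (one_le_pow₀ hL))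

lemma one_add_ctwo_pow_mul_rho_le (hn : n ≠ 0) (hD : 0 < Del m lam) (hL : 1 ≤ Lamb m lam)
    (him : i < m) :
    (1 + Ctwo n m lam i) ^ n * rho n m lam i ≤
      (2 ^ (2 * (n + 1) ^ 2 + 1) * Lamb m lam ^ (n + 1) / Del m lam ^ n) ^ n *
        rho n m lam (i + 1) := by
  have hρ := rho_pos hn hD hL i
  have hρ_succ := rho_pos hn hD hL (i + 1)
  have hC := one_le_ctwo (i := i) hn hD hL
  calc (1 + Ctwo n m lam i) ^ n * rho n m lam i
      ≤ (2 * Ctwo n m lam i) ^ n * rho n m lam i := by gcongr; linarith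
    _ = (2 * Ctwo n m lam i * rho n m lam (i + 1)) ^ n * rho n m lam (i + 1) := by
      rw [rho_eq_rho_succ_pow him]; ring
    _ = _ := by rw [ctwo_eq]; field_simp; ring

/-- The exponents of `Δ`, `2` and `Λ` in `ε` are chosen for this inequality. -/
lemma eps_mul_pow_le (hn : n ≠ 0) (hD : 0 < Del m lam) (hL : 1 ≤ Lamb m lam) :
    4 * n * Lamb m lam * (eps n m lam *
      (2 ^ (2 * (n + 1) ^ 2 + 1) * Lamb m lam ^ (n + 1) / Del m lam ^ n) ^ n) ≤
        Del m lam * Cone n m lam ^ n := by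
  have hexp : 2 + (2 * (n + 1) ^ 2 + 1) * n + (n + 1) * n ≤ 3 * (n + 1) ^ 3 := by ring_nf; nlinarith
  rw [eps, Cone]
  set D := Del m lam
  set L := Lamb m lam
  calc 4 * n * L * (D ^ (n ^ 2 + n + 1) / (n * 2 ^ (3 * (n + 1) ^ 3) * L ^ ((n + 1) ^ 2)) *
        (2 ^ (2 * (n + 1) ^ 2 + 1) * L ^ (n + 1) / D ^ n) ^ n)
      = 2 ^ (2 + (2 * (n + 1) ^ 2 + 1) * n) / 2 ^ (3 * (n + 1) ^ 3) * (D ^ (n + 1) / L ^ n) := by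
        rw [show (n + 1) ^ 2 = (n + 1) * n + (n + 1) by ring,
          show n ^ 2 + n + 1 = n * n + (n + 1) by ring, div_pow, mul_pow, ← pow_mul, ← pow_mul,
          ← pow_mul, pow_add D (n * n), pow_add L ((n + 1) * n), pow_succ L n, pow_add (2 : ℝ) 2]
        field_simp
        norm_num
    _ ≤ 1 / 2 ^ ((n + 1) * n) * (D ^ (n + 1) / L ^ n) := by
        refine mul_le_mul_of_nonneg_right ?_ (by positivity)
        rw [div_le_div_iff₀ (by positivity) (by positivity), ← pow_add, one_mul]
        exact pow_le_pow_right₀ one_le_two hexp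
    _ = D * (D / (2 ^ (n + 1) * L)) ^ n := by
        rw [div_pow, mul_pow, ← pow_mul, pow_succ D]
        field_simp

lemma mul_one_add_ctwo_pow_mul_rho_le (hn : n ≠ 0) (hD : 0 < Del m lam) (hL : 1 ≤ Lamb m lam)
    (him : i < m) {t : ℝ} (ht : rho n m lam (i + 1) ≤ eps n m lam * t) :
    4 * n * Lamb m lam * ((1 + Ctwo n m lam i) ^ n * rho n m lam i) ≤
      Del m lam * (Cone n m lam ^ n * t) := by
  have ht0 : 0 ≤ t :=
    (pos_of_mul_pos_right ((rho_pos hn hD hL (i + 1)).trans_le ht) (eps_pos hn hD hL).le).le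
  set B := (2 ^ (2 * (n + 1) ^ 2 + 1) * Lamb m lam ^ (n + 1) / Del m lam ^ n) ^ n
  have hwidth : (1 + Ctwo n m lam i) ^ n * rho n m lam i ≤ B * (eps n m lam * t) :=
    (one_add_ctwo_pow_mul_rho_le hn hD hL him).trans (mul_le_mul_of_nonneg_left ht (by positivity))
  calc 4 * n * Lamb m lam * ((1 + Ctwo n m lam i) ^ n * rho n m lam i)
      ≤ 4 * n * Lamb m lam * (B * (eps n m lam * t)) := by
        gcongr
    _ = 4 * n * Lamb m lam * (eps n m lam * B) * t := by ring
    _ ≤ Del m lam * Cone n m lam ^ n * t :=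
        mul_le_mul_of_nonneg_right (eps_mul_pow_le hn hD hL) ht0
    _ = _ := by ring

lemma one_add_ctwo_pow_mul_rho_le_del (hn : n ≠ 0) (hD : 0 < Del m lam) (hL : 1 ≤ Lamb m lam)
    (him : i < m) : (1 + Ctwo n m lam i) ^ n * rho n m lam i ≤ Del m lam := by
  have hW : 0 ≤ (1 + Ctwo n m lam i) ^ n * rho n m lam i :=
    mul_nonneg (pow_nonneg (by linarith [one_le_ctwo (i := i) hn hD hL]) n) (rho_pos hn hD hL i).le
  have hn1 : (1 : ℝ) ≤ n := by exact_mod_cast Nat.one_le_iff_ne_zero.mpr hn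
  have hC : Cone n m lam ^ n ≤ 1 := pow_le_one₀ (cone_pos hD hL).le
    ((cone_le_del hD hL).trans del_le_one)
  calc (1 + Ctwo n m lam i) ^ n * rho n m lam i
      ≤ 4 * n * Lamb m lam * ((1 + Ctwo n m lam i) ^ n * rho n m lam i) :=
        le_mul_of_one_le_left hW
          (one_le_mul_of_one_le_of_one_le (one_le_mul_of_one_le_of_one_le (by norm_num) hn1) hL)
    _ ≤ Del m lam * (Cone n m lam ^ n * 1) := mul_one_add_ctwo_pow_mul_rho_le hn hD hL him
        ((rho_le_eps hn hD hL _).trans_eq (mul_one _).symm)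
    _ ≤ Del m lam := mul_le_of_le_one_right hD.le (by rwa [mul_one])

lemma four_mul_lamb_le_ctwo_mul (hn : n ≠ 0) (hD : 0 < Del m lam) (hL : 1 ≤ Lamb m lam) :
    4 * Lamb m lam ≤ Ctwo n m lam i * (Cone n m lam ^ n * rho n m lam (i + 1)) := by
  have hρ := rho_pos hn hD hL (i + 1)
  rw [ctwo_eq, Cone]
  set D := Del m lam
  set L := Lamb m lam
  have hpow : (4 : ℝ) * 2 ^ ((n + 1) * n) ≤ 2 ^ (2 * (n + 1) ^ 2) := by
    rw [show (4 : ℝ) = 2 ^ 2 by norm_num, ← pow_add]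
    exact pow_le_pow_right₀ one_le_two (by ring_nf; omega)
  calc 4 * L ≤ 2 ^ (2 * (n + 1) ^ 2) / 2 ^ ((n + 1) * n) * L := by
        gcongr
        rwa [le_div_iff₀ (by positivity)]
    _ = _ := by
        rw [div_pow, mul_pow, ← pow_mul, pow_succ L]
        field_simp

lemma lamb_div_del_pow_le_CC (hn : n ≠ 0) (hD : 0 < Del m lam) (hL : 1 ≤ Lamb m lam)
    (hj : j ≤ n) : (Lamb m lam / Del m lam) ^ j ≤ CC n m lam := by
  have hDL : Del m lam ≤ Lamb m lam := del_le_one.trans hL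
  have hρ := rho_pos hn hD hL 1
  have hρ1 := (rho_le_eps hn hD hL 1).trans (eps_le_one hn hD hL)
  have hC := cone_pos (n := n) hD hL
  have hCD := cone_le_del (n := n) hD hL
  calc (Lamb m lam / Del m lam) ^ j ≤ (Lamb m lam / Del m lam) ^ n :=
        pow_le_pow_right₀ ((one_le_div hD).mpr hDL) hj
    _ = Lamb m lam ^ n / Del m lam ^ n := div_pow _ _ _
    _ ≤ CC n m lam := by
      refine div_le_div₀ (by positivity) ?_ (by positivity) ?_
      · exact (lt_one_add _).le.trans
          (le_mul_of_one_le_left (by positivity) (one_le_pow₀ one_le_two))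
      · calc Cone n m lam ^ (2 * n ^ 2) * rho n m lam 1 ^ (2 * n)
            ≤ Cone n m lam ^ (2 * n ^ 2) :=
              mul_le_of_le_one_right (by positivity) (pow_le_one₀ hρ.le hρ1)
          _ ≤ Cone n m lam ^ n := pow_le_pow_of_le_one hC.le
              (hCD.trans del_le_one) (by nlinarith)
          _ ≤ Del m lam ^ n := by gcongr

end Constants

/-! ### Roots localized near the nodes `λ_i` -/

/-- The hypotheses on the roots `α 1, …, α (N + 1)` of `F` and `β 1, …, β N` of `G` relative to the
nodes `lam 1 < ⋯ < lam m` (the paper's `p` is `N + 1`): for `i ≤ N` the pair `α i < β i` lies just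
above `lam i`, with `β i - α i` between `C_1 ^ n * ρ_i` and `(1 + C_2(i)) ^ n * ρ_i`, and
`α (N + 1)` lies in `[lam (N + 1), Λ)`. -/
structure LocalizedRoots (n m N : ℕ) (lam α β : ℕ → ℝ) : Prop where
  add_one_le : N + 1 ≤ m
  le : m ≤ n
  lam_one_pos : 0 < lam 1
  lam_lt_succ : ∀ i, 1 ≤ i → i < m → lam i < lam (i + 1)
  lam_le_left : ∀ i, 1 ≤ i → i ≤ N → lam i ≤ α i
  left_add_lt_right : ∀ i, 1 ≤ i → i ≤ N → α i + Cone n m lam ^ n * rho n m lam i < β i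
  right_lt_lam_add : ∀ i, 1 ≤ i → i ≤ N →
    β i < lam i + (1 + Ctwo n m lam i) ^ n * rho n m lam i
  lam_le_last : lam (N + 1) ≤ α (N + 1)
  last_lt : α (N + 1) < Lamb m lam

namespace LocalizedRoots

variable {n m N i : ℕ} {lam α β : ℕ → ℝ}

lemma ne_zero (h : LocalizedRoots n m N lam α β) : n ≠ 0 := by
  have := h.add_one_le
  have := h.le
  omega

lemma one_le_lamb (h : LocalizedRoots n m N lam α β) : 1 ≤ Lamb m lam := by
  have hmono : StrictMonoOn lam (Set.Icc 1 m) :=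
    strictMonoOn_of_lt_add_one Set.ordConnected_Icc fun i _ hi hi' ↦ h.lam_lt_succ i hi.1 hi'.2
  have h1m : 1 ≤ m := by have := h.add_one_le; omega
  have := hmono.monotoneOn ⟨le_rfl, h1m⟩ ⟨h1m, le_rfl⟩ h1m
  exact le_add_of_nonneg_right (h.lam_one_pos.le.trans this)

lemma del_pos (h : LocalizedRoots n m N lam α β) (hN : N ≠ 0) : 0 < Del m lam :=
  _root_.del_pos (by have := h.add_one_le; omega) h.lam_lt_succ

lemma left_lt_right (h : LocalizedRoots n m N lam α β) (hi : 1 ≤ i) (hiN : i ≤ N) :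
    α i < β i := by
  have hD := h.del_pos (by omega)
  have := mul_pos (pow_pos (cone_pos (n := n) hD h.one_le_lamb) n)
    (rho_pos h.ne_zero hD h.one_le_lamb i)
  linarith [h.left_add_lt_right i hi hiN]

lemma right_add_del_lt_lam_succ (h : LocalizedRoots n m N lam α β) (hi : 1 ≤ i) (hiN : i ≤ N) :
    β i + Del m lam < lam (i + 1) := by
  have him : i < m := by have := h.add_one_le; omega
  linarith [h.right_lt_lam_add i hi hiN, two_mul_del_le (lam := lam) hi him,
    one_add_ctwo_pow_mul_rho_le_del h.ne_zero (h.del_pos (by omega)) h.one_le_lamb him]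

lemma right_add_del_le_left_succ (h : LocalizedRoots n m N lam α β) (hi : 1 ≤ i) (hiN : i ≤ N) :
    β i + Del m lam ≤ α (i + 1) := by
  refine (h.right_add_del_lt_lam_succ hi hiN).le.trans ?_
  rcases hiN.eq_or_lt with rfl | hlt
  · exact h.lam_le_last
  · exact h.lam_le_left (i + 1) (by omega) hlt

lemma interlaces (h : LocalizedRoots n m N lam α β) : Interlaces N α β where
  left_lt_right := h.left_lt_right
  right_lt_left_succ hi hiN := by
    linarith [h.right_add_del_le_left_succ hi hiN, h.del_pos (by omega)]

lemma left_one_pos (h : LocalizedRoots n m N lam α β) (hN : N ≠ 0) : 0 < α 1 :=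
  h.lam_one_pos.trans_le (h.lam_le_left 1 le_rfl (Nat.one_le_iff_ne_zero.mpr hN))

lemma mul_sub_le_del_mul_sub (h : LocalizedRoots n m N lam α β) {j : ℕ} (hj : 1 ≤ j) (hji : j < i)
    (hiN : i < N) :
    4 * N * Lamb m lam * (β j - α j) ≤ Del m lam * (β (i + 1) - α (i + 1)) := by
  have hNm := h.add_one_le
  have hn := h.ne_zero
  have hD := h.del_pos (by omega)
  have hL := h.one_le_lamb
  have hNn : (N : ℝ) ≤ n := by exact_mod_cast (by have := h.le; omega : N ≤ n)
  have hαβ := sub_nonneg.mpr (h.left_lt_right hj (by omega)).le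
  have hupper : β j - α j ≤ (1 + Ctwo n m lam j) ^ n * rho n m lam j := by
    linarith [h.lam_le_left j hj (by omega), h.right_lt_lam_add j hj (by omega)]
  have hρ : rho n m lam (j + 1) ≤ eps n m lam * rho n m lam (i + 1) :=
    (rho_le_rho hn hD hL hji).trans (rho_le_eps_mul_rho_succ hn hD hL (by omega))
  calc 4 * N * Lamb m lam * (β j - α j)
      ≤ 4 * n * Lamb m lam * ((1 + Ctwo n m lam j) ^ n * rho n m lam j) := by gcongr
    _ ≤ Del m lam * (Cone n m lam ^ n * rho n m lam (i + 1)) :=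
        mul_one_add_ctwo_pow_mul_rho_le hn hD hL (by omega) hρ
    _ ≤ Del m lam * (β (i + 1) - α (i + 1)) := by
        gcongr
        linarith [h.left_add_lt_right (i + 1) (by omega) hiN]

lemma four_mul_lamb_le_ctwo_mul_sub (h : LocalizedRoots n m N lam α β) (hiN : i < N) :
    4 * Lamb m lam ≤ Ctwo n m lam i * (β (i + 1) - α (i + 1)) := by
  have hn := h.ne_zero
  have hD := h.del_pos (by omega)
  have hL := h.one_le_lamb
  refine (four_mul_lamb_le_ctwo_mul (i := i) hn hD hL).trans
    (mul_le_mul_of_nonneg_left ?_ (zero_le_one.trans (one_le_ctwo hn hD hL)))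
  linarith [h.left_add_lt_right (i + 1) (by omega) hiN]

lemma lamb_div_del_pow_le_CC (h : LocalizedRoots n m N lam α β) {j : ℕ} (hj : j ≤ N)
    (hN : N ≠ 0) : (Lamb m lam / Del m lam) ^ j ≤ CC n m lam :=
  _root_.lamb_div_del_pow_le_CC h.ne_zero (h.del_pos hN) h.one_le_lamb (by
    have := h.add_one_le
    have := h.le
    omega)

lemma one_le_CC (h : LocalizedRoots n m N lam α β) (hN : N ≠ 0) : 1 ≤ CC n m lam := by
  simpa using h.lamb_div_del_pow_le_CC N.zero_le hN

lemma sub_left_le_right_sub (h : LocalizedRoots n m N lam α β) {K c x : ℝ} (hc : 0 < c)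
    (hcK : CC n m lam * c < K) (hi : 1 ≤ i) (hiN : i ≤ N) (hx : x ∈ Set.Ioo (α i) (β i))
    (hroot : K * (nodal (Icc 1 (N + 1)) α).eval x = c * (X * nodal (Icc 1 N) β).eval x) :
    x - α i ≤ β i - x := by
  have hD := h.del_pos (by omega)
  have hK : (Lamb m lam / Del m lam) ^ N * c ≤ K :=
    (mul_le_mul_of_nonneg_right (h.lamb_div_del_pow_le_CC le_rfl (by omega)) hc.le).trans hcK.le
  refine h.interlaces.sub_left_le_right_sub (h.left_one_pos (by omega)) hD
    (fun _ ↦ h.right_add_del_le_left_succ) h.last_lt.le hc ?_ hi hiN hx hroot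
  rwa [div_pow, div_mul_eq_mul_div, div_le_iff₀ (by positivity), mul_comm] at hK

lemma cone_mul_sub_le_sub (h : LocalizedRoots n m N lam α β) (hi : 1 ≤ i) (hiN : i ≤ N) {a b : ℝ}
    (ha : a - α i ≤ β i - a) (hb : β i < b) : Cone n m lam * (β i - α i) ≤ b - a := by
  have hC : Cone n m lam ≤ 1 / 2 :=
    (cone_le_del (h.del_pos (by omega)) h.one_le_lamb).trans del_le_half
  calc Cone n m lam * (β i - α i) ≤ 1 / 2 * (β i - α i) :=
        mul_le_mul_of_nonneg_right hC (sub_nonneg.mpr (h.left_lt_right hi hiN).le)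
    _ ≤ b - a := by linarith

lemma sub_le_ctwo_mul_sub (h : LocalizedRoots n m N lam α β) {α' : ℕ → ℝ} {r x : ℝ}
    (h' : Interlaces N α' β) (hα' : ∀ j, 1 ≤ j → j ≤ N → α j < α' j) (hi : 1 ≤ i) (hiN : i < N)
    (hmid : α' (i + 1) - α (i + 1) ≤ β (i + 1) - α' (i + 1)) (hr : r < 1)
    (hx : x ∈ Set.Ioo (β i) (α' (i + 1)))
    (hroot : (nodal (Icc 1 N) β).eval x = r * (nodal (Icc 1 N) α').eval x) :
    x - α' i ≤ Ctwo n m lam i * (β i - α i) := by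
  have hbound := h.interlaces.sub_left_mul_le (h.left_one_pos (by omega)) (h.del_pos (by omega))
    (fun _ ↦ h.right_add_del_le_left_succ) h.last_lt.le h' hα' hi hiN hmid
    (fun _ hj hji ↦ h.mul_sub_le_del_mul_sub hj hji hiN) hr hx hroot
  have hαβ := sub_nonneg.mpr (h.left_lt_right hi hiN.le).le
  refine le_of_mul_le_mul_right ?_ (sub_pos.mpr (h.left_lt_right (i := i + 1) (by omega) hiN))
  calc (x - α' i) * (β (i + 1) - α (i + 1)) ≤ 4 * Lamb m lam * (β i - α i) := hbound
    _ ≤ Ctwo n m lam i * (β (i + 1) - α (i + 1)) * (β i - α i) :=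
        mul_le_mul_of_nonneg_right (h.four_mul_lamb_le_ctwo_mul_sub hiN) hαβ
    _ = Ctwo n m lam i * (β i - α i) * (β (i + 1) - α (i + 1)) := by ring

end LocalizedRoots

lemma exists_coeffs_of_sub_eq {F G F₀ G₀ : ℝ[X]} {μ ν c r l : ℝ} (hν : ν ≠ 0) (hc : c < -μ / ν)
    (hr : r ∈ Set.Ioo (0 : ℝ) 1)
    (hF : C (-μ / ν) * F - C c * (X * G) = C (-μ / ν - c) * ((X - C l) * F₀))
    (hG : G - C r * F₀ = C (1 - r) * ((X - C l) * G₀)) :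
    ∃ b μ₀ ν₀ : ℝ, 0 < b ∧ -μ₀ / ν₀ > -μ / ν - c ∧
      C μ * F = -(C c * C ν) * X * G + C b * C μ₀ * (C l - X) * F₀ ∧
      C ν * G = C μ₀ * F₀ + C b * C ν₀ * (C l - X) * G₀ := by
  obtain ⟨hr0, hr1⟩ := hr
  have hμ : μ = -(ν * (-μ / ν)) := by field_simp
  set K := -μ / ν
  have hKc : 0 < K - c := sub_pos.mpr hc
  have h1r : 0 < 1 - r := sub_pos.mpr hr1
  refine ⟨(K - c) / r, ν * r, -(ν * (1 - r) * r / (K - c)), by positivity, ?_, ?_, ?_⟩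
  · have hratio : -(ν * r) / -(ν * (1 - r) * r / (K - c)) = (K - c) / (1 - r) := by field_simp
    rw [hratio, gt_iff_lt, lt_div_iff₀ h1r]
    exact mul_lt_of_lt_one_right hKc (by linarith)
  · have hbμ : C ((K - c) / r) * C (ν * r) = C ν * C (K - c) := by
      rw [← C_mul, ← C_mul]; congr 1; field_simp
    rw [hbμ, hμ, C_neg, C_mul]
    linear_combination (-C ν) * hF
  · have hbν : C ((K - c) / r) * C (-(ν * (1 - r) * r / (K - c))) = -(C ν * C (1 - r)) := by
      rw [← C_mul, ← C_mul, ← C_neg]; congr 1; field_simp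
    rw [hbν, C_mul]
    linear_combination C ν * hG

theorem stmt_14_general {n m k : ℕ} {lam α β : ℕ → ℝ} (h : LocalizedRoots n m (k + 1) lam α β)
    {μ ν mstar : ℝ} (hmstar : 0 < mstar) (hν : ν ≠ 0) (hμν : CC n m lam * mstar < -μ / ν) :
    ∃ (α' β' : ℕ → ℝ) (lamstar bstar μ₀ ν₀ : ℝ),
      (∀ i, 1 ≤ i → i < k + 1 → α' i < α' (i + 1)) ∧
      (∀ i, 1 ≤ i → i < k → β' i < β' (i + 1)) ∧
      α (k + 1) < α' (k + 1) ∧ α' (k + 1) < lam (k + 2) ∧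
      (∀ i, 1 ≤ i → i ≤ k →
        α i < α' i ∧ α' i < β i ∧
        Cone n m lam * (β i - α i) ≤ β' i - α' i ∧
        β' i - α' i ≤ Ctwo n m lam i * (β i - α i)) ∧
      0 < lamstar ∧ 0 < bstar ∧ -μ₀ / ν₀ > -μ / ν - mstar ∧
      C μ * nodal (Icc 1 (k + 2)) α =
        -(C mstar * C ν) * X * nodal (Icc 1 (k + 1)) β +
          C bstar * C μ₀ * (C lamstar - X) * nodal (Icc 1 (k + 1)) α' ∧
      C ν * nodal (Icc 1 (k + 1)) β =
        C μ₀ * nodal (Icc 1 (k + 1)) α' +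
          C bstar * C ν₀ * (C lamstar - X) * nodal (Icc 1 k) β' := by
  have hα := h.left_one_pos k.succ_ne_zero
  have hK : mstar < -μ / ν :=
    (le_mul_of_one_le_left hmstar.le (h.one_le_CC k.succ_ne_zero)).trans_lt hμν
  obtain ⟨α', hα', hlast, hF⟩ := h.interlaces.exists_mul_nodal_left_sub_eq hα hmstar hK
  have hαα' : ∀ i, 1 ≤ i → i ≤ k + 1 → α i < α' i := fun i hi hik ↦ (hα' i hi hik).1
  have h' := h.interlaces.move_left hα' hlast
  obtain ⟨r, hr, β', hβ', hG⟩ := h'.exists_nodal_right_sub_mul_eq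
  have hmid : ∀ i, 1 ≤ i → i ≤ k + 1 → α' i - α i ≤ β i - α' i := fun i hi hik ↦
    h.sub_left_le_right_sub hmstar hμν hi hik (hα' i hi hik) <| by
      simpa [sub_eq_zero, eval_nodal_at_node (s := Icc 1 (k + 2)) (v := α')
        (mem_Icc.mpr ⟨hi, by omega⟩)] using congrArg (eval (α' i)) hF
  have hroot : ∀ i, 1 ≤ i → i ≤ k → (nodal (Icc 1 (k + 1)) β).eval (β' i) =
      r * (nodal (Icc 1 (k + 1)) α').eval (β' i) := fun i hi hik ↦ by
    simpa [sub_eq_zero, eval_nodal_at_node (s := Icc 1 k) (v := β') (mem_Icc.mpr ⟨hi, hik⟩)]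
      using congrArg (eval (β' i)) hG
  rw [nodal_Icc_add_one (k + 1) α'] at hF
  obtain ⟨b, μ₀, ν₀, hb, hratio, hF', hG'⟩ := exists_coeffs_of_sub_eq hν hK hr hF hG
  refine ⟨α', β', α' (k + 2), b, μ₀, ν₀, fun i hi hik ↦ ?_, fun i hi hik ↦ ?_,
    hαα' _ (by omega) le_rfl, ?_, fun i hi hik ↦
      ⟨hαα' i hi (by omega), (hα' i hi (by omega)).2, ?_, ?_⟩, ?_, hb, hratio, hF', hG'⟩
  · exact (h'.left_lt_right hi hik.le).trans (h'.right_lt_left_succ hi hik.le)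
  · exact (hβ' i hi hik.le).2.trans
      ((h'.left_lt_right (by omega) (by omega)).trans (hβ' (i + 1) (by omega) hik).1)
  · have hgap := h.right_add_del_lt_lam_succ (i := k + 1) (by omega) le_rfl
    linarith [(hα' (k + 1) (by omega) le_rfl).2, h.del_pos k.succ_ne_zero]
  · exact h.cone_mul_sub_le_sub hi (by omega) (hmid i hi (by omega)) (hβ' i hi hik).1
  · exact h.sub_le_ctwo_mul_sub h' hαα' hi (by omega) (hmid (i + 1) (by omega) (by omega)) hr.2
      (hβ' i hi hik) (hroot i hi hik)
  · exact (hα.trans_le (h.interlaces.left_le_left le_rfl (by omega) le_rfl)).trans hlast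

end

/-- Lemma `cas1`(i): the case `p > 2`. -/
theorem stmt_14 (n m : ℕ) (hm : 2 ≤ m) (hmn : m ≤ n) (lam : ℕ → ℝ)
    (hpos : 0 < lam 1) (hmono : ∀ i, 1 ≤ i → i < m → lam i < lam (i + 1))
    (p : ℕ) (hp2 : 2 < p) (hpm : p ≤ m)
    (α β : ℕ → ℝ)
    (hαp : lam p ≤ α p ∧ α p < Lamb m lam)
    (hroots : ∀ i, 1 ≤ i → i ≤ p - 1 →
      lam i ≤ α i ∧
      α i + Cone n m lam ^ n * rho n m lam i < β i ∧
      β i < lam i + (1 + Ctwo n m lam i) ^ n * rho n m lam i ∧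
      lam i + (1 + Ctwo n m lam i) ^ n * rho n m lam i < lam (i + 1))
    (MM μ ν mstar : ℝ) (hMM : 0 < MM) (hms : 0 < mstar ∧ mstar < MM)
    (hν : ν ≠ 0) (hμν : -μ / ν > CC n m lam * MM) :
    ∃ (α' β' : ℕ → ℝ) (lamstar bstar μ₀ ν₀ : ℝ),
      (∀ i, 1 ≤ i → i < p - 1 → α' i < α' (i + 1)) ∧
      (∀ i, 1 ≤ i → i < p - 2 → β' i < β' (i + 1)) ∧
      α (p - 1) < α' (p - 1) ∧ α' (p - 1) < lam p ∧
      (∀ i, 1 ≤ i → i ≤ p - 2 →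
        α i < α' i ∧ α' i < β i ∧
        Cone n m lam * (β i - α i) ≤ β' i - α' i ∧
        β' i - α' i ≤ Ctwo n m lam i * (β i - α i)) ∧
      0 < lamstar ∧ 0 < bstar ∧ -μ₀ / ν₀ > -μ / ν - mstar ∧
      Polynomial.C μ * ∏ i ∈ Finset.Icc 1 p, (Polynomial.X - Polynomial.C (α i)) =
        -(Polynomial.C mstar * Polynomial.C ν) * Polynomial.X *
            ∏ i ∈ Finset.Icc 1 (p - 1), (Polynomial.X - Polynomial.C (β i)) +
          Polynomial.C bstar * Polynomial.C μ₀ * (Polynomial.C lamstar - Polynomial.X) *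
            ∏ i ∈ Finset.Icc 1 (p - 1), (Polynomial.X - Polynomial.C (α' i)) ∧
      Polynomial.C ν * ∏ i ∈ Finset.Icc 1 (p - 1), (Polynomial.X - Polynomial.C (β i)) =
        Polynomial.C μ₀ *
            ∏ i ∈ Finset.Icc 1 (p - 1), (Polynomial.X - Polynomial.C (α' i)) +
          Polynomial.C bstar * Polynomial.C ν₀ * (Polynomial.C lamstar - Polynomial.X) *
            ∏ i ∈ Finset.Icc 1 (p - 2), (Polynomial.X - Polynomial.C (β' i)) := by
  obtain ⟨k, rfl⟩ := Nat.exists_eq_add_of_le' hp2.le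
  have hloc : LocalizedRoots n m (k + 1) lam α β :=
    { add_one_le := hpm
      le := hmn
      lam_one_pos := hpos
      lam_lt_succ := hmono
      lam_le_left := fun i hi hik ↦ (hroots i hi hik).1
      left_add_lt_right := fun i hi hik ↦ (hroots i hi hik).2.1
      right_lt_lam_add := fun i hi hik ↦ (hroots i hi hik).2.2.1
      lam_le_last := hαp.1
      last_lt := hαp.2 }
  have hCC : 0 ≤ CC n m lam := zero_le_one.trans (hloc.one_le_CC k.succ_ne_zero)
  exact stmt_14_general hloc hms.1 hν ((mul_le_mul_of_nonneg_left hms.2.le hCC).trans_lt hμν)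
end
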